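/- arXiv:1407.2597 — 9 statements merged into one kernel-verified Lean document; each statement's English description precedes it below -/
import Mathlib

section
/- Let p ≥ 2 and n ≥ 1 be integers and let U_1, …, U_p : (0,∞) → ℝ be continuous functions. For 0 ≤ j, ℓ ≤ n−1 define the bimoments I_{jℓ} = ∫_{(0,∞)^p} w_1^j · w_p^ℓ · exp(−∑_{m=1}^p U_m(w_m)) / ∏_{m=1}^{p−1}(w_m + w_{m+1}) dw_1 ⋯ dw_p, and assume each of these integrands is Lebesgue integrable on (0,∞)^p. Then the bimoment determinant Δ_n = det[I_{jℓ}]_{j,ℓ=0}^{n−1} is strictly positive. -/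
open MeasureTheory

/-!
Expanding the determinant of integrals by Fubini turns `Δ_n` into one integral over `n` copies of
the chain. The underlying measure is invariant under permuting the `n` copies separately at each
site, so the integrand may be replaced by its average over all such families of permutations. The
average factorises into determinants, one for each end of the chain and one for each link. For the
Cauchy kernel the end determinants are Vandermonde determinants `V` and each link contributes a
positive multiple of `V(x_m) V(x_{m+1})`, so every `V(x_m)` occurs exactly twice: the averaged
integrand is nonnegative, and positive once the `n` copies are pairwise distinct at each site.

Symmetrising at all sites at once, instead of applying the Cauchy–Binet–Andréief identity link by
link, needs no integrability of the partially integrated kernels.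
-/

namespace CauchyChain

open Matrix Equiv Function

section CauchyDeterminant

variable {F : Type*} [Field F] {n : ℕ}

theorem det_of_mul_mul {R ι : Type*} [CommRing R] [Fintype ι] [DecidableEq ι] (a b : ι → R)
    (A : ι → ι → R) :
    (of fun i j => a i * (b j * A i j)).det = (∏ i, a i) * ((∏ j, b j) * (of A).det) :=
  (det_mul_column a (of fun i j => b j * A i j)).trans (congrArg _ (det_mul_row b (of A)))

theorem det_eq_pivot_mul_det_schur (A : Matrix (Fin (n + 1)) (Fin (n + 1)) F) (hA : A 0 0 ≠ 0) :
    A.det = A 0 0 * (of fun i j : Fin n =>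
      A i.succ j.succ - A i.succ 0 * (A 0 0)⁻¹ * A 0 j.succ).det := by
  let S : Matrix (Fin n) (Fin n) F :=
    of fun i j => A i.succ j.succ - A i.succ 0 * (A 0 0)⁻¹ * A 0 j.succ
  let B : Matrix (Fin (n + 1)) (Fin (n + 1)) F :=
    of (Fin.cons (A 0) fun i => Fin.cons 0 (S i))
  have det_eq : A.det = B.det := by
    refine det_eq_of_forall_row_eq_smul_add_const
      (Fin.cons 0 fun i => A i.succ 0 * (A 0 0)⁻¹) 0 rfl fun i j => ?_
    cases i using Fin.cases with
    | zero => simp [B]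
    | succ i => cases j using Fin.cases <;> simp [B, S, hA]
  have pivot_eq : B 0 0 = A 0 0 := rfl
  have column_zero_eq (i : Fin n) : B i.succ 0 = 0 := rfl
  have minor_eq : B.submatrix Fin.succ Fin.succ = S := rfl
  rw [det_eq, det_succ_column_zero, Fin.sum_univ_succ]
  simp [pivot_eq, column_zero_eq, minor_eq, S]

theorem det_vandermonde_eq_prod_mul_det_tail {R : Type*} [CommRing R] (x : Fin (n + 1) → R) :
    (vandermonde x).det =
      (∏ i : Fin n, (x i.succ - x 0)) * (vandermonde fun i : Fin n => x i.succ).det := by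
  simp only [det_vandermonde, Fin.prod_univ_succ, Fin.prod_Ioi_zero, Fin.prod_Ioi_succ]

theorem det_cauchy (x y : Fin n → F) (hxy : ∀ i j, x i + y j ≠ 0) :
    (of fun i j => (x i + y j)⁻¹).det =
      (∏ i, ∏ j, (x i + y j)⁻¹) * ((vandermonde x).det * (vandermonde y).det) := by
  induction n with
  | zero => simp
  | succ n ih =>
    have schur_entry (i j : Fin n) : (x i.succ + y j.succ)⁻¹ -
        (x i.succ + y 0)⁻¹ * ((x 0 + y 0)⁻¹)⁻¹ * (x 0 + y j.succ)⁻¹ =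
        ((x i.succ - x 0) * (x i.succ + y 0)⁻¹) *
          (((y j.succ - y 0) * (x 0 + y j.succ)⁻¹) * (x i.succ + y j.succ)⁻¹) := by
      have := hxy 0 j.succ
      have := hxy i.succ 0
      have := hxy i.succ j.succ
      field_simp
      ring
    rw [det_eq_pivot_mul_det_schur _ (inv_ne_zero (hxy 0 0))]
    simp only [of_apply, schur_entry]
    rw [det_of_mul_mul, ih (fun i => x i.succ) (fun j => y j.succ) fun i j => hxy _ _,
      det_vandermonde_eq_prod_mul_det_tail x, det_vandermonde_eq_prod_mul_det_tail y]
    simp only [Fin.prod_univ_succ, Finset.prod_mul_distrib]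
    ring

end CauchyDeterminant

section Symmetrisation

variable {R ι : Type*} [CommRing R] [Fintype ι] [DecidableEq ι] {q : ℕ}

theorem sum_perm_sign_mul_prod_chain (K : Fin q → Matrix ι ι R) (B : Matrix ι ι R) :
    ∑ τ : Fin (q + 1) → Perm ι, ((Perm.sign (τ 0) : ℤ) : R) *
      ∏ l, ((∏ m, K m (τ m.castSucc l) (τ m.succ l)) * B (τ (Fin.last q) l) l) =
    (∏ m, (K m).det) * B.det := by
  induction q with
  | zero =>
    rw [← (Equiv.funUnique (Fin 1) (Perm ι)).symm.sum_comp, det_apply']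
    simp
  | succ q ih =>
    -- Summing over the permutation at the first site transfers the sign to the next site.
    have sum_first (ρ : Perm ι) : ∑ σ : Perm ι, ((Perm.sign σ : ℤ) : R) * ∏ l, K 0 (σ l) (ρ l) =
        (K 0).det * ((Perm.sign ρ : ℤ) : R) := by
      rw [mul_comm, ← det_permute', det_apply']
      rfl
    rw [← (Fin.consEquiv fun _ : Fin (q + 2) => Perm ι).sum_comp, Fintype.sum_prod_type_right,
      Fin.prod_univ_succ, mul_assoc, ← ih fun m => K m.succ, Finset.mul_sum]
    refine Finset.sum_congr rfl fun τ _ => ?_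
    rw [← mul_assoc, ← sum_first, Finset.sum_mul]
    refine Finset.sum_congr rfl fun σ _ => ?_
    simp only [Fin.consEquiv_apply, Fin.prod_univ_succ (n := q), Finset.prod_mul_distrib,
      ← Fin.succ_last, ← Fin.succ_castSucc, Fin.castSucc_zero, Fin.cons_zero, Fin.cons_succ]
    ring

variable {X : Fin (q + 1) → Type*}

/-- The integrand `φ(w₀) K₀(w₀, w₁) ⋯ K_{q-1}(w_{q-1}, w_q) ψ(w_q)` of a chain of kernels on the
sites `0, …, q`, with functions `φ` and `ψ` attached to its two ends. -/
def chainProd (φ : X 0 → R) (K : ∀ m : Fin q, X m.castSucc → X m.succ → R)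
    (ψ : X (Fin.last q) → R) (w : ∀ m, X m) : R :=
  φ (w 0) * (∏ m, K m (w m.castSucc) (w m.succ)) * ψ (w (Fin.last q))

/-- The determinantal counterpart of `chainProd`: each factor is replaced by its determinant over
`ι`-many copies of the chain, `x m i` being the variable of copy `i` at site `m`. -/
def chainDet (φ : ι → X 0 → R) (K : ∀ m : Fin q, X m.castSucc → X m.succ → R)
    (ψ : ι → X (Fin.last q) → R) (x : ∀ m, ι → X m) : R :=
  (of fun j i => φ j (x 0 i)).det *
    (∏ m, (of fun i i' => K m (x m.castSucc i) (x m.succ i')).det) *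
    (of fun i l => ψ l (x (Fin.last q) i)).det

theorem sum_perm_det_chainProd (φ : ι → X 0 → R) (K : ∀ m : Fin q, X m.castSucc → X m.succ → R)
    (ψ : ι → X (Fin.last q) → R) (x : ∀ m, ι → X m) :
    ∑ τ : Fin (q + 1) → Perm ι,
      (of fun j l => chainProd (φ j) K (ψ l) fun m => x m (τ m l)).det = chainDet φ K ψ x := by
  rw [chainDet, mul_assoc, ← sum_perm_sign_mul_prod_chain, Finset.mul_sum]
  refine Finset.sum_congr rfl fun τ _ => ?_
  let φMatrix : Matrix ι ι R := of fun j i => φ j (x 0 i)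
  let weight (l : ι) : R := (∏ m : Fin q, K m (x m.castSucc (τ m.castSucc l))
    (x m.succ (τ m.succ l))) * ψ l (x (Fin.last q) (τ (Fin.last q) l))
  calc (of fun j l => chainProd (φ j) K (ψ l) fun m => x m (τ m l)).det
      = (of fun j l => weight l * φMatrix.submatrix id (τ 0) j l).det := by
        congr 1
        ext j l
        simp only [of_apply, chainProd, weight, φMatrix, submatrix_apply, id]
        ring
    _ = φMatrix.det * (((Perm.sign (τ 0) : ℤ) : R) * ∏ l, weight l) := by
        rw [det_mul_row, det_permute']
        ring

end Symmetrisation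

section ProductMeasure

theorem integral_comp_of_measurePreserving {α β E : Type*} [MeasurableSpace α] [MeasurableSpace β]
    [NormedAddCommGroup E] [NormedSpace ℝ E] {μ : Measure α} {ν : Measure β} {T : α → β}
    (hT : MeasurePreserving T μ ν) {g : β → E} (hg : Integrable g ν) :
    ∫ x, g (T x) ∂μ = ∫ y, g y ∂ν := by
  rw [← hT.map_eq, integral_map hT.aemeasurable (hT.map_eq ▸ hg.aestronglyMeasurable)]

theorem measurePreserving_pi_comm {ι κ : Type*} [Fintype ι] [Fintype κ] {X : ι → κ → Type*}
    [∀ i k, MeasurableSpace (X i k)] (μ : ∀ i k, Measure (X i k)) [∀ i k, SigmaFinite (μ i k)] :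
    MeasurePreserving (fun (w : ∀ i k, X i k) k i => w i k)
      (Measure.pi fun i => Measure.pi fun k => μ i k)
      (Measure.pi fun k => Measure.pi fun i => μ i k) := by
  have measurable_comm : Measurable fun (w : ∀ i k, X i k) k i => w i k := by fun_prop
  refine ⟨measurable_comm, Eq.symm <| Measure.pi_eq_generateFrom
    (fun _ => generateFrom_pi) (fun _ => isPiSystem_pi)
    (fun k => Measure.FiniteSpanningSetsIn.pi fun i => (μ i k).toFiniteSpanningSetsIn)
    fun s hs => ?_⟩
  choose t ht hts using hs
  obtain rfl : (fun k => Set.univ.pi (t k)) = s := funext hts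
  have preimage_eq : (fun (w : ∀ i k, X i k) k i => w i k) ⁻¹'
      (Set.univ.pi fun k => Set.univ.pi (t k)) =
        Set.univ.pi fun i => Set.univ.pi fun k => t k i := by
    ext w
    simp only [Set.mem_preimage, Set.mem_univ_pi]
    exact forall_comm
  rw [Measure.map_apply measurable_comm (.univ_pi fun k => .univ_pi fun i => ht k i trivial),
    preimage_eq]
  simp only [Measure.pi_pi]
  exact Finset.prod_comm

theorem measurePreserving_comp_perm {ι X : Type*} [Fintype ι] [MeasurableSpace X] (μ : Measure X)
    [SigmaFinite μ] (σ : Perm ι) :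
    MeasurePreserving (fun x : ι → X => x ∘ σ) (Measure.pi fun _ => μ) (Measure.pi fun _ => μ) :=
  measurePreserving_arrowCongr' (fun _ => μ) (fun _ => μ) σ.symm (.refl X) fun _ => .id μ

theorem measurePreserving_pi_comm_perm {ι κ : Type*} [Fintype ι] [Fintype κ] {X : κ → Type*}
    [∀ k, MeasurableSpace (X k)] (μ : ∀ k, Measure (X k)) [∀ k, SigmaFinite (μ k)]
    (τ : κ → Perm ι) :
    MeasurePreserving (fun (x : ∀ k, ι → X k) i k => x k (τ k i))
      (Measure.pi fun k => Measure.pi fun _ => μ k) (Measure.pi fun _ => Measure.pi μ) :=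
  (measurePreserving_pi_comm fun k (_ : ι) => μ k).comp
    (measurePreserving_pi _ _ fun k => measurePreserving_comp_perm (μ k) (τ k))

theorem frequently_injective_pi {X : Type*} [MeasurableSpace X] (μ : Measure X) [SigmaFinite μ]
    {n : ℕ} (hμ : ∀ s : Finset X, s.card < n → μ (↑s)ᶜ ≠ 0) :
    ∃ᵐ x ∂Measure.pi fun _ : Fin n => μ, Injective x := by
  classical
  induction n with
  | zero =>
    rw [Measure.pi_of_empty (fun _ : Fin 0 => μ) (Fin.elim0 ·)]
    exact Filter.Eventually.frequently (.of_forall fun x => injective_of_subsingleton x)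
  | succ n ih =>
    intro ae_not_injective
    have ae_tail_ae_head : ∀ᵐ t ∂Measure.pi fun _ : Fin n => μ, ∀ᵐ a ∂μ,
        ¬Injective (Fin.cons a t : Fin (n + 1) → X) := by
      have split := (measurePreserving_piFinSuccAbove (fun _ : Fin (n + 1) => μ) 0).symm.comp
        Measure.measurePreserving_swap
      refine (Measure.ae_ae_of_ae_prod (split.quasiMeasurePreserving.ae ae_not_injective)).mono
        fun t ht => ht.mono fun a ha => ?_
      simpa [Fin.consEquiv] using ha
    obtain ⟨t, ht, ae_not_injective_cons⟩ :=
      ((ih fun s hs => hμ s (hs.trans n.lt_succ_self)).and_eventually ae_tail_ae_head).exists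
    refine hμ (Finset.univ.image t)
      ((Finset.card_image_le.trans_eq (Finset.card_fin n)).trans_lt n.lt_succ_self) ?_
    refine ae_not_injective_cons.mono fun a ha => ?_
    simpa [Fin.cons_injective_iff, ht] using ha

theorem measure_compl_finset_ne_zero {X : Type*} [MeasurableSpace X] {μ : Measure X}
    [NullSingletonClass μ] (hμ : μ ≠ 0) (s : Finset X) : μ (↑s)ᶜ ≠ 0 := by
  intro compl_null
  refine hμ (Measure.measure_univ_eq_zero.1 ?_)
  rw [← Set.union_compl_self (s : Set X)]
  exact measure_union_null (s.finite_toSet.measure_zero μ) compl_null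

theorem frequently_forall_pi {ι : Type*} [Fintype ι] {X : ι → Type*} [∀ i, MeasurableSpace (X i)]
    {μ : ∀ i, Measure (X i)} [∀ i, SigmaFinite (μ i)] {P : ∀ i, X i → Prop}
    (hP : ∀ i, ∃ᵐ x ∂μ i, P i x) : ∃ᵐ x ∂Measure.pi μ, ∀ i, P i (x i) := by
  simp only [frequently_ae_iff] at hP ⊢
  rw [show {x | ∀ i, P i (x i)} = Set.univ.pi fun i => {a | P i a} by ext; simp, Measure.pi_pi]
  exact Finset.prod_ne_zero_iff.2 fun i _ => hP i

theorem ae_forall_pi {ι : Type*} [Fintype ι] {X : ι → Type*} [∀ i, MeasurableSpace (X i)]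
    {μ : ∀ i, Measure (X i)} [∀ i, SigmaFinite (μ i)] {P : ∀ i, X i → Prop}
    (hP : ∀ i, ∀ᵐ x ∂μ i, P i x) : ∀ᵐ x ∂Measure.pi μ, ∀ i, P i (x i) :=
  ae_all_iff.2 fun i => Measure.tendsto_eval_ae_ae.eventually (hP i)

theorem integral_pos_of_nonneg_of_frequently_pos {α : Type*} [MeasurableSpace α] {μ : Measure α}
    {f : α → ℝ} (hf : Integrable f μ) (nonneg : 0 ≤ᵐ[μ] f) (pos : ∃ᵐ x ∂μ, 0 < f x) :
    0 < ∫ x, f x ∂μ := by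
  rw [integral_pos_iff_support_of_nonneg_ae nonneg hf, pos_iff_ne_zero]
  exact frequently_ae_iff.1 (pos.mono fun _ hx => hx.ne')

end ProductMeasure

section Andreief

variable {𝕜 ι : Type*} [RCLike 𝕜] [Fintype ι] [DecidableEq ι]

section Columns

variable {X : ι → Type*} [∀ i, MeasurableSpace (X i)] {ν : ∀ i, Measure (X i)}
  [∀ i, SigmaFinite (ν i)] {f : ι → ∀ l, X l → 𝕜}

theorem integrable_det_of_columns (hf : ∀ j l, Integrable (f j l) (ν l)) :
    Integrable (fun w => (of fun j l => f j l (w l)).det) (Measure.pi ν) := by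
  simp only [det_apply', of_apply]
  exact integrable_finsetSum _ fun σ _ =>
    (Integrable.fintype_prod_dep fun l => hf (σ l) l).const_mul _

theorem integral_det_of_columns (hf : ∀ j l, Integrable (f j l) (ν l)) :
    ∫ w, (of fun j l => f j l (w l)).det ∂Measure.pi ν =
      (of fun j l => ∫ x, f j l x ∂ν l).det := by
  simp only [det_apply', of_apply]
  rw [integral_finsetSum _ fun σ _ =>
    (Integrable.fintype_prod_dep fun l => hf (σ l) l).const_mul _]
  simp only [integral_const_mul, integral_fintype_prod_eq_prod fun l => f _ l]

end Columns

variable {q : ℕ} {X : Fin (q + 1) → Type*} [∀ m, MeasurableSpace (X m)]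
  {ν : ∀ m, Measure (X m)} [∀ m, SigmaFinite (ν m)]
  {φ : ι → X 0 → 𝕜} {K : ∀ m : Fin q, X m.castSucc → X m.succ → 𝕜} {ψ : ι → X (Fin.last q) → 𝕜}

theorem integrable_det_chainProd_perm
    (hint : ∀ j l, Integrable (chainProd (φ j) K (ψ l)) (Measure.pi ν))
    (τ : Fin (q + 1) → Perm ι) :
    Integrable (fun x : ∀ m, ι → X m =>
        (of fun j l => chainProd (φ j) K (ψ l) fun m => x m (τ m l)).det)
      (Measure.pi fun m => Measure.pi fun _ => ν m) :=
  (measurePreserving_pi_comm_perm ν τ).integrable_comp_of_integrable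
    (integrable_det_of_columns hint)

theorem integral_det_chainProd_perm
    (hint : ∀ j l, Integrable (chainProd (φ j) K (ψ l)) (Measure.pi ν))
    (τ : Fin (q + 1) → Perm ι) :
    ∫ x : ∀ m, ι → X m, (of fun j l => chainProd (φ j) K (ψ l) fun m => x m (τ m l)).det
        ∂(Measure.pi fun m => Measure.pi fun _ => ν m) =
      (of fun j l => ∫ w, chainProd (φ j) K (ψ l) w ∂Measure.pi ν).det :=
  (integral_comp_of_measurePreserving (measurePreserving_pi_comm_perm ν τ)
    (integrable_det_of_columns hint)).trans (integral_det_of_columns hint)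

theorem integrable_chainDet
    (hint : ∀ j l, Integrable (chainProd (φ j) K (ψ l)) (Measure.pi ν)) :
    Integrable (chainDet φ K ψ) (Measure.pi fun m => Measure.pi fun _ => ν m) := by
  simp only [← funext (sum_perm_det_chainProd φ K ψ)]
  exact integrable_finsetSum _ fun τ _ => integrable_det_chainProd_perm hint τ

theorem integral_chainDet
    (hint : ∀ j l, Integrable (chainProd (φ j) K (ψ l)) (Measure.pi ν)) :
    ∫ x, chainDet φ K ψ x ∂(Measure.pi fun m => Measure.pi fun _ => ν m) =
      Fintype.card (Fin (q + 1) → Perm ι) *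
        (of fun j l => ∫ w, chainProd (φ j) K (ψ l) w ∂Measure.pi ν).det := by
  simp only [← sum_perm_det_chainProd]
  rw [integral_finsetSum _ fun τ _ => integrable_det_chainProd_perm hint τ]
  simp only [integral_det_chainProd_perm hint, Finset.sum_const,
    Finset.card_univ, nsmul_eq_mul]

end Andreief

section Bimoments

variable {q n : ℕ} (U : Fin (q + 1) → ℝ → ℝ)

/-- The integrand of the bimoment `I_{jℓ}` of the Cauchy chain with potentials `U`. The sites
are numbered `0, …, q`, so that the number of matrices is `p = q + 1`. -/
noncomputable def bimomentIntegrand (j l : ℕ) (w : Fin (q + 1) → ℝ) : ℝ :=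
  w 0 ^ j * w (Fin.last q) ^ l * Real.exp (-(∑ m, U m (w m))) /
    ∏ m : Fin q, (w m.castSucc + w m.succ)

/-- The Cauchy kernel of the link from site `m` to site `m + 1`, carrying the weight of the
site `m`. -/
noncomputable def weightedCauchyKernel (m : Fin q) (x y : ℝ) : ℝ :=
  Real.exp (-U m.castSucc x) * (x + y)⁻¹

/-- The monomial of degree `l` at the last site, carrying the weight of that site. -/
noncomputable def weightedMonomial (l : ℕ) (y : ℝ) : ℝ :=
  Real.exp (-U (Fin.last q) y) * y ^ l

/-- The symmetrised integrand of the bimoment determinant of size `n`. -/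
noncomputable def cauchyChainDet (x : Fin (q + 1) → Fin n → ℝ) : ℝ :=
  chainDet (fun (j : Fin n) a => a ^ (j : ℕ)) (weightedCauchyKernel U)
    (fun l : Fin n => weightedMonomial U l) x

theorem bimomentIntegrand_eq_chainProd (j l : ℕ) :
    bimomentIntegrand U j l =
      chainProd (fun a => a ^ j) (weightedCauchyKernel U) (weightedMonomial U l) := by
  ext w
  simp only [bimomentIntegrand, chainProd, weightedCauchyKernel, weightedMonomial,
    ← Finset.sum_neg_distrib, Real.exp_sum, Fin.prod_univ_castSucc (n := q),
    Finset.prod_mul_distrib, Finset.prod_inv_distrib]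
  ring

theorem cauchyChainDet_eq {x : Fin (q + 1) → Fin n → ℝ} (hx : ∀ m i, 0 < x m i) :
    cauchyChainDet U x =
      (∏ m, ((∏ i, Real.exp (-U m (x m i))) * (vandermonde (x m)).det ^ 2)) *
        ∏ m : Fin q, ∏ i, ∏ j, (x m.castSucc i + x m.succ j)⁻¹ := by
  have det_left : (of fun j i : Fin n => x 0 i ^ (j : ℕ)).det = (vandermonde (x 0)).det :=
    det_transpose (vandermonde (x 0))
  have det_right : (of fun i l : Fin n => weightedMonomial U l (x (Fin.last q) i)).det =
      (∏ i, Real.exp (-U (Fin.last q) (x (Fin.last q) i))) *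
        (vandermonde (x (Fin.last q))).det :=
    det_mul_column _ (vandermonde (x (Fin.last q)))
  have det_link (m : Fin q) :
      (of fun i j => weightedCauchyKernel U m (x m.castSucc i) (x m.succ j)).det =
        (∏ i, Real.exp (-U m.castSucc (x m.castSucc i))) *
          ((∏ i, ∏ j, (x m.castSucc i + x m.succ j)⁻¹) *
            ((vandermonde (x m.castSucc)).det * (vandermonde (x m.succ)).det)) := by
    rw [← det_cauchy _ _ fun i j => (add_pos (hx _ i) (hx _ j)).ne']
    exact det_mul_column _ (of fun i j => (x m.castSucc i + x m.succ j)⁻¹)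
  have prod_vandermonde_sq : ∏ m, (vandermonde (x m)).det ^ 2 =
      ((vandermonde (x 0)).det * ∏ m : Fin q, (vandermonde (x m.succ)).det) *
        ((∏ m : Fin q, (vandermonde (x m.castSucc)).det) *
          (vandermonde (x (Fin.last q))).det) := by
    rw [← Fin.prod_univ_succ fun m => (vandermonde (x m)).det,
      ← Fin.prod_univ_castSucc fun m => (vandermonde (x m)).det, Finset.prod_pow, sq]
  rw [cauchyChainDet, chainDet, det_left, det_right, Finset.prod_congr rfl fun m _ => det_link m,
    Finset.prod_mul_distrib (s := Finset.univ (α := Fin (q + 1))), prod_vandermonde_sq,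
    Fin.prod_univ_castSucc fun m => ∏ i, Real.exp (-U m (x m i))]
  simp only [Finset.prod_mul_distrib]
  ring

theorem prod_inv_add_pos {x : Fin (q + 1) → Fin n → ℝ} (hx : ∀ m i, 0 < x m i) :
    0 < ∏ m : Fin q, ∏ i, ∏ j, (x m.castSucc i + x m.succ j)⁻¹ :=
  Finset.prod_pos fun _ _ => Finset.prod_pos fun _ _ => Finset.prod_pos fun _ _ =>
    inv_pos.2 (add_pos (hx _ _) (hx _ _))

theorem cauchyChainDet_nonneg {x : Fin (q + 1) → Fin n → ℝ} (hx : ∀ m i, 0 < x m i) :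
    0 ≤ cauchyChainDet U x := by
  rw [cauchyChainDet_eq U hx]
  exact mul_nonneg (Finset.prod_nonneg fun m _ => by positivity) (prod_inv_add_pos hx).le

theorem cauchyChainDet_pos {x : Fin (q + 1) → Fin n → ℝ} (hx : ∀ m i, 0 < x m i)
    (inj : ∀ m, Injective (x m)) : 0 < cauchyChainDet U x := by
  rw [cauchyChainDet_eq U hx]
  refine mul_pos (Finset.prod_pos fun m _ => ?_) (prod_inv_add_pos hx)
  have vandermonde_ne_zero := det_vandermonde_ne_zero_iff.2 (inj m)
  positivity

end Bimoments

end CauchyChain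

open CauchyChain in
theorem bimoment_det_pos_general {q n : ℕ} (μ : Fin (q + 1) → Measure ℝ) [∀ m, SigmaFinite (μ m)]
    (μ_pos : ∀ m, ∀ᵐ x ∂μ m, 0 < x) (μ_card : ∀ m (s : Finset ℝ), s.card < n → μ m (↑s)ᶜ ≠ 0)
    (U : Fin (q + 1) → ℝ → ℝ)
    (hint : ∀ j l : Fin n, Integrable (bimomentIntegrand U j l) (Measure.pi μ)) :
    0 < (Matrix.of fun j l : Fin n => ∫ w, bimomentIntegrand U j l w ∂Measure.pi μ).det := by
  simp only [bimomentIntegrand_eq_chainProd] at hint ⊢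
  have ae_pos : ∀ᵐ x ∂Measure.pi fun m => Measure.pi fun _ : Fin n => μ m, ∀ m i, 0 < x m i :=
    ae_forall_pi fun m => ae_forall_pi fun _ => μ_pos m
  have frequently_injective : ∃ᵐ x ∂Measure.pi fun m => Measure.pi fun _ : Fin n => μ m,
      ∀ m, Function.Injective (x m) :=
    frequently_forall_pi fun m => frequently_injective_pi (μ m) (μ_card m)
  have integral_pos : 0 < ∫ x, cauchyChainDet U x
      ∂Measure.pi fun m => Measure.pi fun _ : Fin n => μ m :=
    integral_pos_of_nonneg_of_frequently_pos (integrable_chainDet hint)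
      (ae_pos.mono fun _ hx => cauchyChainDet_nonneg U hx)
      ((frequently_injective.and_eventually ae_pos).mono fun _ hx =>
        cauchyChainDet_pos U hx.2 hx.1)
  exact pos_of_mul_pos_right ((integral_chainDet hint).symm ▸ integral_pos) (Nat.cast_nonneg _)

/-- Positivity of the bimoment determinants of the Cauchy chain-matrix model. -/
theorem bimoment_det_pos (p n : ℕ) (hp : 2 ≤ p) (hn : 1 ≤ n)
    (U : Fin p → ℝ → ℝ) (hU : ∀ m, ContinuousOn (U m) (Set.Ioi 0))
    (f : ℕ → ℕ → (Fin p → ℝ) → ℝ)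
    (hf : ∀ j ℓ w, f j ℓ w =
      (w ⟨0, by omega⟩) ^ j * (w ⟨p - 1, by omega⟩) ^ ℓ *
        Real.exp (-(∑ m, U m (w m))) /
        ∏ m : Fin (p - 1),
          (w ⟨m.1, by have := m.2; omega⟩ + w ⟨m.1 + 1, by have := m.2; omega⟩))
    (hint : ∀ j ℓ : Fin n,
      IntegrableOn (f j ℓ) (Set.univ.pi fun _ : Fin p => Set.Ioi (0 : ℝ)))
    (I : ℕ → ℕ → ℝ)
    (hI : ∀ j ℓ : Fin n,
      I j ℓ = ∫ w in Set.univ.pi fun _ : Fin p => Set.Ioi (0 : ℝ), f j ℓ w) :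
    0 < Matrix.det (Matrix.of fun j ℓ : Fin n => I j ℓ) := by
  obtain ⟨q, rfl⟩ : ∃ q, p = q + 1 := ⟨p - 1, by omega⟩
  obtain rfl : f = CauchyChain.bimomentIntegrand U := funext₃ hf
  simp only [hI, IntegrableOn, volume_pi, Measure.restrict_pi_pi] at hint ⊢
  exact bimoment_det_pos_general (fun _ => volume.restrict (Set.Ioi 0))
    (fun _ => ae_restrict_mem measurableSet_Ioi)
    (fun _ s _ => CauchyChain.measure_compl_finset_ne_zero (by simp) s) U hint
end

section
/- Let p ≥ 3 and n ≥ 1 be integers and let U_1, …, U_p : (0,∞) → ℝ be continuous. For x, y > 0 define η_p(x,y) = ∫_{(0,∞)^{p−2}} [e^{−U_1(x)}/(x+ξ_1)] · [exp(−∑_{j=2}^{p−1} U_j(ξ_{j−1})) / ∏_{j=1}^{p−3}(ξ_j+ξ_{j+1})] · [e^{−U_p(y)}/(ξ_{p−2}+y)] dξ_1 ⋯ dξ_{p−2}. Let 0 < x_1 < x_2 < ⋯ < x_n and 0 < y_1 < y_2 < ⋯ < y_n, and assume that for every pair (i,j) the integrand defining η_p(x_i, y_j) is Lebesgue integrable on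 (0,∞)^{p−2}. Then det[η_p(x_i, y_j)]_{i,j=1}^n > 0; in particular η_p is a totally positive kernel on (0,∞)². -/
open MeasureTheory

/-!
Rescaling rows and columns by positive factors reduces the claim to the kernel obtained by
integrating a chain of Cauchy kernels `1 / (z + z')` with positive weights at the interior points.
Cauchy determinants at increasing nodes are positive, by Gaussian elimination. Convolution preserves
positivity of all minors: by Andréief's identity, the continuous Cauchy–Binet formula, `n!` times a
minor of the convolution is the integral over `z₁, …, zₙ` of a product of two minors. Sorting the
`z`'s changes both minors by the same sign, so the product is positive whenever the `z`'s are
distinct, which is almost everywhere. Induction on the number of interior points concludes; by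
Fubini, the integral over the remaining points converges for almost every first interior point.
-/

open Matrix Set

section Pivot

variable {F : Type*} [Field F] {n : ℕ}

theorem det_succ_eq_mul_det_pivot (A : Matrix (Fin (n + 1)) (Fin (n + 1)) F) (hA : A 0 0 ≠ 0) :
    A.det = A 0 0 *
      (of fun i j : Fin n => A i.succ j.succ - A i.succ 0 / A 0 0 * A 0 j.succ).det := by
  let c : Fin (n + 1) → F := Fin.cons 0 fun i => A i.succ 0 / A 0 0
  let B : Matrix (Fin (n + 1)) (Fin (n + 1)) F := of fun i j => A i j - c i * A 0 j
  have det_eq : A.det = B.det :=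
    det_eq_of_forall_row_eq_smul_add_const c 0 rfl fun i j => by simp [B, c]
  have column_zero (i : Fin n) : B i.succ 0 = 0 := by simp [B, c, hA]
  rw [det_eq, det_succ_column_zero, Fin.sum_univ_succ]
  simp only [column_zero, mul_zero, zero_mul, Finset.sum_const_zero, add_zero]
  simp [B, c, submatrix]

/-- The Cauchy kernel `K(x, y) = 1 / (x + y)`; it takes the junk value `0` where `x + y = 0`. -/
def cauchyKernel (x y : F) : F := (x + y)⁻¹

theorem det_cauchyKernel_succ (x y : Fin (n + 1) → F) (hxy : ∀ i j, x i + y j ≠ 0) :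
    (of fun i j => cauchyKernel (x i) (y j)).det =
      cauchyKernel (x 0) (y 0) * ((∏ i : Fin n, (x i.succ - x 0) / (x i.succ + y 0)) *
        ((∏ j : Fin n, (y j.succ - y 0) / (x 0 + y j.succ)) *
          (of fun i j : Fin n => cauchyKernel (x i.succ) (y j.succ)).det)) := by
  rw [det_succ_eq_mul_det_pivot _ (by simpa [cauchyKernel] using hxy 0 0),
    ← det_mul_row, ← det_mul_column]
  congr 2
  ext i j
  simp only [of_apply, cauchyKernel]
  field_simp [hxy]
  ring

end Pivot

section Andreief

theorem det_mul_det_eq_sum_perm {ι R : Type*} [Fintype ι] [DecidableEq ι] [CommRing R]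
    (A B : Matrix ι ι R) :
    A.det * B.det = ∑ τ : Equiv.Perm ι, ∑ σ : Equiv.Perm ι,
      (τ.sign : R) * ((σ.sign : R) * ∏ k, A (σ k) k * B (τ k) k) := by
  simp only [det_apply', Finset.sum_mul_sum, Finset.prod_mul_distrib]
  rw [Finset.sum_comm]
  exact Finset.sum_congr rfl fun τ _ => Finset.sum_congr rfl fun σ _ => by ring

variable {ι α 𝕜 : Type*} [Fintype ι] [DecidableEq ι] [RCLike 𝕜] [MeasurableSpace α]
  {μ : Measure α} [SigmaFinite μ]

theorem integrable_sign_mul_sign_mul_prod {f g : ι → α → 𝕜}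
    (hfg : ∀ i j, Integrable (fun z => f i z * g j z) μ) (τ σ : Equiv.Perm ι) :
    Integrable (fun z : ι → α =>
        (τ.sign : 𝕜) * ((σ.sign : 𝕜) * ∏ k, f (σ k) (z k) * g (τ k) (z k)))
      (Measure.pi fun _ => μ) :=
  ((Integrable.fintype_prod fun k => hfg (σ k) (τ k)).const_mul _).const_mul _

theorem integrable_det_mul_det {f g : ι → α → 𝕜}
    (hfg : ∀ i j, Integrable (fun z => f i z * g j z) μ) :
    Integrable (fun z : ι → α => (of fun i k => f i (z k)).det * (of fun j k => g j (z k)).det)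
      (Measure.pi fun _ => μ) := by
  simp only [det_mul_det_eq_sum_perm, of_apply]
  exact integrable_finsetSum _ fun τ _ => integrable_finsetSum _ fun σ _ =>
    integrable_sign_mul_sign_mul_prod hfg τ σ

theorem integral_det_mul_det {f g : ι → α → 𝕜}
    (hfg : ∀ i j, Integrable (fun z => f i z * g j z) μ) :
    ∫ z : ι → α, (of fun i k => f i (z k)).det * (of fun j k => g j (z k)).det
        ∂(Measure.pi fun _ => μ) =
      (Fintype.card ι).factorial * (of fun i j => ∫ z, f i z * g j z ∂μ).det := by
  set M : Matrix ι ι 𝕜 := of fun i j => ∫ z, f i z * g j z ∂μ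
  have integrable_term := integrable_sign_mul_sign_mul_prod hfg
  have integral_prod (τ σ : Equiv.Perm ι) :
      ∫ z : ι → α, ∏ k, f (σ k) (z k) * g (τ k) (z k) ∂(Measure.pi fun _ => μ) =
        ∏ k, M (σ k) (τ k) :=
    integral_fintype_prod_eq_prod fun k z => f (σ k) z * g (τ k) z
  have sum_sign_mul_prod_eq_det (τ : Equiv.Perm ι) :
      ∑ σ : Equiv.Perm ι, (τ.sign : 𝕜) * ((σ.sign : 𝕜) * ∏ k, M (σ k) (τ k)) = M.det := by
    have sign_mul_sign : (τ.sign : 𝕜) * (τ.sign : 𝕜) = 1 := by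
      rw [← Int.cast_mul, ← Units.val_mul, Int.units_mul_self, Units.val_one, Int.cast_one]
    rw [← Finset.mul_sum]
    calc (τ.sign : 𝕜) * ∑ σ : Equiv.Perm ι, (σ.sign : 𝕜) * ∏ k, M (σ k) (τ k)
        = τ.sign * (M.submatrix id τ).det := by rw [det_apply']; rfl
      _ = M.det := by rw [det_permute', ← mul_assoc, sign_mul_sign, one_mul]
  simp only [det_mul_det_eq_sum_perm, of_apply]
  rw [integral_finsetSum _ fun τ _ => integrable_finsetSum _ fun σ _ => integrable_term τ σ]
  simp only [integral_finsetSum _ fun σ _ => integrable_term _ σ, integral_const_mul,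
    integral_prod, sum_sign_mul_prod_eq_det, Finset.sum_const, Finset.card_univ,
    Fintype.card_perm, nsmul_eq_mul]

end Andreief

section AlmostEverywhere

theorem integral_pos_of_ae_pos {α : Type*} [MeasurableSpace α] {μ : Measure α} [NeZero μ]
    {f : α → ℝ} (hf : ∀ᵐ z ∂μ, 0 < f z) (hint : Integrable f μ) : 0 < ∫ z, f z ∂μ := by
  have support_ae_univ : Function.support f =ᵐ[μ] univ :=
    Filter.eventuallyEq_univ.2 (hf.mono fun _ => ne_of_gt)
  rw [integral_pos_iff_support_of_nonneg_ae (hf.mono fun _ => le_of_lt) hint,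
    measure_congr support_ae_univ, Measure.measure_univ_pos]
  exact NeZero.ne μ

variable {ι α : Type*} [Fintype ι] [MeasurableSpace α] (μ : ι → Measure α) [∀ i, SigmaFinite (μ i)]

instance neZero_measurePi [∀ i, NeZero (μ i)] : NeZero (Measure.pi μ) := by
  refine ⟨Measure.measure_univ_ne_zero.1 ?_⟩
  rw [Measure.pi_univ, Finset.prod_ne_zero_iff]
  exact fun i _ => Measure.measure_univ_ne_zero.2 (NeZero.ne (μ i))

variable [MeasurableEq α] [∀ i, NullSingletonClass (μ i)]

theorem ae_pi_apply_ne_apply {i j : ι} (hij : i ≠ j) : ∀ᵐ z ∂Measure.pi μ, z i ≠ z j := by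
  classical
  -- Freeze all coordinates but the `i`-th, which then avoids the single value `z j`.
  have split := measurePreserving_piEquivPiSubtypeProd μ (· ≠ i)
  refine split.quasiMeasurePreserving.ae
    (p := fun q => q.2 ⟨i, not_not.2 rfl⟩ ≠ q.1 ⟨j, hij.symm⟩) ?_
  refine (Measure.ae_prod_iff_ae_ae
    (measurableSet_eq_fun (by fun_prop) (by fun_prop)).compl).2 ?_
  exact .of_forall fun q => Measure.ae_eval_ne (fun k : {k // ¬ k ≠ i} => μ k) _ _

theorem ae_pi_injective : ∀ᵐ z ∂Measure.pi μ, Function.Injective z := by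
  have pairwise_ne : ∀ᵐ z ∂Measure.pi μ, ∀ i j, i ≠ j → z i ≠ z j := by
    simp only [ae_all_iff]
    exact fun i j => ae_pi_apply_ne_apply μ
  filter_upwards [pairwise_ne] with z hz i j
  exact not_imp_not.1 (hz i j)

end AlmostEverywhere

/-- All minors of the kernel `K` with increasing row nodes in `s` and increasing column nodes in `t`
are positive. The sets `s` and `t` allow for kernels, such as convergent integrals, that are only
meaningful on part of their domain. -/
def StrictlyTotallyPositiveOn {α β : Type*} [Preorder α] [Preorder β] (K : α → β → ℝ)
    (s : Set α) (t : Set β) : Prop :=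
  ∀ (n : ℕ) (x : Fin n → α) (y : Fin n → β), StrictMono x → StrictMono y →
    (∀ i, x i ∈ s) → (∀ j, y j ∈ t) → 0 < (of fun i j => K (x i) (y j)).det

theorem strictlyTotallyPositiveOn_cauchyKernel :
    StrictlyTotallyPositiveOn (cauchyKernel (F := ℝ)) (Ioi 0) (Ioi 0) := by
  intro n
  induction n with
  | zero => simp
  | succ n ih =>
    intro x y hx hy hx0 hy0
    have add_pos_nodes (i j) : 0 < x i + y j := add_pos (hx0 i) (hy0 j)
    rw [det_cauchyKernel_succ x y fun i j => (add_pos_nodes i j).ne']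
    refine mul_pos (inv_pos.2 (add_pos_nodes 0 0)) (mul_pos ?_ (mul_pos ?_ ?_))
    · exact Finset.prod_pos fun i _ => div_pos (sub_pos.2 (hx i.succ_pos)) (add_pos_nodes _ _)
    · exact Finset.prod_pos fun j _ => div_pos (sub_pos.2 (hy j.succ_pos)) (add_pos_nodes _ _)
    · exact ih (x ∘ Fin.succ) (y ∘ Fin.succ) (hx.comp Fin.strictMono_succ)
        (hy.comp Fin.strictMono_succ) (fun i => hx0 i.succ) fun j => hy0 j.succ

namespace StrictlyTotallyPositiveOn

section Algebra

variable {α β : Type*} [Preorder α] [Preorder β] {K : α → β → ℝ} {s s' : Set α} {t t' : Set β}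

theorem mono (hK : StrictlyTotallyPositiveOn K s t) (hs : s' ⊆ s) (ht : t' ⊆ t) :
    StrictlyTotallyPositiveOn K s' t' :=
  fun n x y hx hy hxs hyt => hK n x y hx hy (fun i => hs (hxs i)) fun j => ht (hyt j)

theorem pos (hK : StrictlyTotallyPositiveOn K s t) {x : α} {y : β} (hx : x ∈ s) (hy : y ∈ t) :
    0 < K x y := by
  simpa using hK 1 (fun _ => x) (fun _ => y) (Subsingleton.strictMono _) (Subsingleton.strictMono _)
    (fun _ => hx) fun _ => hy

theorem mul_left (hK : StrictlyTotallyPositiveOn K s t) {a : α → ℝ} (ha : ∀ x ∈ s, 0 < a x) :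
    StrictlyTotallyPositiveOn (fun x y => a x * K x y) s t := by
  intro n x y hx hy hxs hyt
  rw [show (of fun i j => a (x i) * K (x i) (y j)).det =
      (∏ i, a (x i)) * (of fun i j => K (x i) (y j)).det from det_mul_column _ _]
  exact mul_pos (Finset.prod_pos fun i _ => ha _ (hxs i)) (hK n x y hx hy hxs hyt)

theorem mul_right (hK : StrictlyTotallyPositiveOn K s t) {b : β → ℝ} (hb : ∀ y ∈ t, 0 < b y) :
    StrictlyTotallyPositiveOn (fun x y => K x y * b y) s t := by
  intro n x y hx hy hxs hyt
  rw [show (of fun i j => K (x i) (y j) * b (y j)).det =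
      (∏ j, b (y j)) * (of fun i j => K (x i) (y j)).det by
    simp only [mul_comm _ (b _)]; exact det_mul_row _ _]
  exact mul_pos (Finset.prod_pos fun j _ => hb _ (hyt j)) (hK n x y hx hy hxs hyt)

end Algebra

section Convolution

variable {α β γ : Type*} [Preorder α] [LinearOrder β] [Preorder γ]
  {K : α → β → ℝ} {L : β → γ → ℝ} {s : Set α} {u : Set β} {t : Set γ}

theorem det_mul_det_pos (hK : StrictlyTotallyPositiveOn K s u)
    (hL : StrictlyTotallyPositiveOn L u t) {n : ℕ} {x : Fin n → α} {y : Fin n → γ} {z : Fin n → β}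
    (hx : StrictMono x) (hy : StrictMono y) (hxs : ∀ i, x i ∈ s) (hyt : ∀ j, y j ∈ t)
    (hz : Function.Injective z) (hzu : ∀ k, z k ∈ u) :
    0 < (of fun i k => K (x i) (z k)).det * (of fun k j => L (z k) (y j)).det := by
  let σ := Tuple.sort z
  have hσ : StrictMono (z ∘ σ) :=
    (Tuple.monotone_sort z).strictMono_of_injective (hz.comp σ.injective)
  -- Permuting the columns of the first factor and the rows of the second by the same `σ` does not
  -- change the product of the two matrices.
  have hsort : (of fun i k => K (x i) (z k)) * (of fun k j => L (z k) (y j)) =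
      (of fun i k => K (x i) ((z ∘ σ) k)) * (of fun k j => L ((z ∘ σ) k) (y j)) :=
    (submatrix_mul_equiv _ _ id σ id).symm
  rw [← det_mul, hsort, det_mul]
  exact mul_pos (hK n x _ hx hσ hxs fun k => hzu _) (hL n _ y hσ hy (fun k => hzu _) hyt)

theorem integral_mul [MeasurableSpace β] [MeasurableEq β] {μ : Measure β} [SigmaFinite μ]
    [NullSingletonClass μ] [NeZero μ] (hK : StrictlyTotallyPositiveOn K s u)
    (hL : StrictlyTotallyPositiveOn L u t) (hu : ∀ᵐ z ∂μ, z ∈ u)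
    (hint : ∀ x ∈ s, ∀ y ∈ t, Integrable (fun z => K x z * L z y) μ) :
    StrictlyTotallyPositiveOn (fun x y => ∫ z, K x z * L z y ∂μ) s t := by
  intro n x y hx hy hxs hyt
  have hint_nodes (i j : Fin n) : Integrable (fun z => K (x i) z * L z (y j)) μ :=
    hint _ (hxs i) _ (hyt j)
  have hzu : ∀ᵐ z ∂Measure.pi fun _ : Fin n => μ, ∀ k, z k ∈ u :=
    ae_all_iff.2 fun k => (Measure.quasiMeasurePreserving_eval (fun _ => μ) k).ae hu
  have minors_pos : ∀ᵐ z ∂Measure.pi fun _ : Fin n => μ,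
      0 < (of fun i k => K (x i) (z k)).det * (of fun j k => L (z k) (y j)).det := by
    filter_upwards [ae_pi_injective fun _ : Fin n => μ, hzu] with z hz hzu
    rw [← det_transpose (of fun j k => L (z k) (y j))]
    exact hK.det_mul_det_pos hL hx hy hxs hyt hz hzu
  have andreief := integral_pos_of_ae_pos minors_pos (integrable_det_mul_det hint_nodes)
  rw [integral_det_mul_det hint_nodes] at andreief
  exact pos_of_mul_pos_right andreief (Nat.cast_nonneg _)

end Convolution

end StrictlyTotallyPositiveOn

section Chain

variable {α : Type*}

/-- The weight of the path from `x` to `y` through the intermediate points `ξ`: the product of the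
kernel `K` over consecutive points and of the weights `w` at the intermediate ones. For `m = 0` it
is `K x y`. -/
def chainIntegrand (K : α → α → ℝ) :
    {m : ℕ} → (w : Fin m → α → ℝ) → (x y : α) → (ξ : Fin m → α) → ℝ
  | 0, _, x, y, _ => K x y
  | _ + 1, w, x, y, ξ =>
    K x (ξ 0) * (w 0 (ξ 0) * chainIntegrand K (Fin.tail w) (ξ 0) y (Fin.tail ξ))

theorem chainIntegrand_succ_eq_prod (K : α → α → ℝ) {m : ℕ} (w : Fin (m + 1) → α → ℝ) (x y : α)
    (ξ : Fin (m + 1) → α) :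
    chainIntegrand K w x y ξ = K x (ξ 0) *
      ((∏ j, w j (ξ j)) * ∏ j : Fin m, K (ξ j.castSucc) (ξ j.succ)) * K (ξ (Fin.last m)) y := by
  induction m generalizing x with
  | zero => simp [chainIntegrand, mul_assoc]
  | succ m ih =>
    rw [chainIntegrand, ih, Fin.prod_univ_succ (fun j => w j (ξ j)),
      Fin.prod_univ_succ (fun j : Fin (m + 1) => K (ξ j.castSucc) (ξ j.succ))]
    simp only [Fin.tail, Fin.castSucc_zero, Fin.succ_last, Fin.succ_castSucc]
    ring

variable [MeasurableSpace α]

/-- The kernel obtained by convolving copies of `K` against the weights `w`: the integral of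
`chainIntegrand` over the intermediate points. -/
noncomputable def chainKernel (K : α → α → ℝ) (μ : Measure α) {m : ℕ} (w : Fin m → α → ℝ)
    (x y : α) : ℝ :=
  ∫ ξ, chainIntegrand K w x y ξ ∂Measure.pi fun _ => μ

variable {K : α → α → ℝ} {μ : Measure α} {m : ℕ}

theorem chainKernel_zero (w : Fin 0 → α → ℝ) : chainKernel K μ w = K := by
  ext x y
  simp [chainKernel, chainIntegrand, measureReal_def]

section Succ

variable {w : Fin (m + 1) → α → ℝ} {x y : α}

theorem integral_chainIntegrand_tail (z : α) :
    ∫ ζ, K x z * (w 0 z * chainIntegrand K (Fin.tail w) z y ζ) ∂(Measure.pi fun _ => μ) =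
      K x z * (w 0 z * chainKernel K μ (Fin.tail w) z y) := by
  simp only [integral_const_mul, chainKernel]

variable [SigmaFinite μ]

theorem integrable_prod_chainIntegrand
    (h : Integrable (chainIntegrand K w x y) (Measure.pi fun _ => μ)) :
    Integrable (fun q : α × (Fin m → α) =>
        K x q.1 * (w 0 q.1 * chainIntegrand K (Fin.tail w) q.1 y q.2))
      (μ.prod (Measure.pi fun _ => μ)) :=
  ((measurePreserving_piFinSuccAbove (fun _ => μ) 0).integrable_comp_emb
    (MeasurableEquiv.measurableEmbedding _)).1 h

theorem chainKernel_succ (h : Integrable (chainIntegrand K w x y) (Measure.pi fun _ => μ)) :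
    chainKernel K μ w x y = ∫ z, K x z * (w 0 z * chainKernel K μ (Fin.tail w) z y) ∂μ := by
  let F (q : α × (Fin m → α)) : ℝ :=
    K x q.1 * (w 0 q.1 * chainIntegrand K (Fin.tail w) q.1 y q.2)
  simp only [← integral_chainIntegrand_tail]
  rw [← integral_prod F (integrable_prod_chainIntegrand h)]
  exact (measurePreserving_piFinSuccAbove (fun _ => μ) 0).integral_comp' F

theorem integrable_mul_chainKernel_tail
    (h : Integrable (chainIntegrand K w x y) (Measure.pi fun _ => μ)) :
    Integrable (fun z => K x z * (w 0 z * chainKernel K μ (Fin.tail w) z y)) μ := by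
  simpa only [integral_chainIntegrand_tail] using
    (integrable_prod_chainIntegrand h).integral_prod_left

theorem ae_integrable_chainIntegrand_tail
    (h : Integrable (chainIntegrand K w x y) (Measure.pi fun _ => μ))
    (hK : ∀ᵐ z ∂μ, K x z ≠ 0) (hw : ∀ᵐ z ∂μ, w 0 z ≠ 0) :
    ∀ᵐ z ∂μ, Integrable (chainIntegrand K (Fin.tail w) z y) (Measure.pi fun _ => μ) := by
  filter_upwards [(integrable_prod_chainIntegrand h).prod_right_ae, hK, hw] with z hz hKz hwz
  rwa [integrable_const_mul_iff hKz.isUnit, integrable_const_mul_iff hwz.isUnit] at hz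

end Succ

theorem StrictlyTotallyPositiveOn.chainKernel [LinearOrder α] [MeasurableEq α]
    [SigmaFinite μ] [NullSingletonClass μ] [NeZero μ] {D s t : Set α}
    (hK : StrictlyTotallyPositiveOn K D D) (hD : ∀ᵐ z ∂μ, z ∈ D) (hs : s ⊆ D) (ht : t ⊆ D)
    {w : Fin m → α → ℝ} (hw : ∀ j, ∀ z ∈ D, 0 < w j z)
    (hint : ∀ x ∈ s, ∀ y ∈ t, Integrable (chainIntegrand K w x y) (Measure.pi fun _ => μ)) :
    StrictlyTotallyPositiveOn (chainKernel K μ w) s t := by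
  induction m generalizing s t with
  | zero => simpa only [chainKernel_zero] using hK.mono hs ht
  | succ m ih =>
    rintro (_ | n) x y hx hy hxs hyt
    · simp
    have hint_nodes (i j) := hint _ (hxs i) _ (hyt j)
    -- Restricting to finitely many column nodes keeps the exceptional set of `z` null.
    let u : Set α := {z ∈ D | ∀ j,
      Integrable (chainIntegrand K (Fin.tail w) z (y j)) (Measure.pi fun _ => μ)}
    have hu : ∀ᵐ z ∂μ, z ∈ u := by
      refine hD.and (ae_all_iff.2 fun j => ae_integrable_chainIntegrand_tail (hint_nodes 0 j) ?_ ?_)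
      · exact hD.mono fun z hz => (hK.pos (hs (hxs 0)) hz).ne'
      · exact hD.mono fun z hz => (hw 0 z hz).ne'
    have tail_pos : StrictlyTotallyPositiveOn
        (fun z y => w 0 z * _root_.chainKernel K μ (Fin.tail w) z y) u (range y) := by
      refine mul_left (ih (sep_subset _ _) (range_subset_iff.2 fun j => ht (hyt j))
        (fun j => hw j.succ) ?_) fun z hz => hw 0 z hz.1
      rintro z hz _ ⟨j, rfl⟩
      exact hz.2 j
    have head_pos : StrictlyTotallyPositiveOn K (range x) u :=
      hK.mono (range_subset_iff.2 fun i => hs (hxs i)) (sep_subset _ _)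
    simp only [chainKernel_succ (hint_nodes _ _)]
    refine head_pos.integral_mul tail_pos hu ?_ _ x y hx hy mem_range_self mem_range_self
    rintro _ ⟨i, rfl⟩ _ ⟨j, rfl⟩
    exact integrable_mul_chainKernel_tail (hint_nodes i j)

end Chain

theorem cauchyChain_integrand_eq {m : ℕ} (U : Fin (m + 3) → ℝ → ℝ) (x y : ℝ)
    (ξ : Fin (m + 1) → ℝ) :
    Real.exp (-U 0 x) / (x + ξ 0) *
        (Real.exp (-∑ j : Fin (m + 1), U j.succ.castSucc (ξ j)) /
          ∏ j : Fin m, (ξ j.castSucc + ξ j.succ)) *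
        (Real.exp (-U (Fin.last _) y) / (ξ (Fin.last m) + y)) =
      Real.exp (-U 0 x) *
        (chainIntegrand cauchyKernel (fun j z => Real.exp (-U j.succ.castSucc z)) x y ξ *
          Real.exp (-U (Fin.last _) y)) := by
  simp only [chainIntegrand_succ_eq_prod, cauchyKernel, Finset.prod_inv_distrib, ← Real.exp_sum,
    Finset.sum_neg_distrib]
  ring

theorem cauchyChain_strictlyTotallyPositiveOn {m : ℕ} {w : Fin m → ℝ → ℝ} {s t : Set ℝ}
    (hs : s ⊆ Ioi 0) (ht : t ⊆ Ioi 0) (hw : ∀ j, ∀ z ∈ Ioi 0, 0 < w j z)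
    (hint : ∀ x ∈ s, ∀ y ∈ t, IntegrableOn (chainIntegrand cauchyKernel w x y)
      (univ.pi fun _ => Ioi 0)) :
    StrictlyTotallyPositiveOn
      (fun x y => ∫ ξ in univ.pi fun _ => Ioi 0, chainIntegrand cauchyKernel w x y ξ) s t := by
  have : NeZero (volume (Ioi (0 : ℝ))) := ⟨by simp⟩
  simp only [IntegrableOn, volume_pi, Measure.restrict_pi_pi] at hint ⊢
  exact strictlyTotallyPositiveOn_cauchyKernel.chainKernel (ae_restrict_mem measurableSet_Ioi)
    hs ht hw hint

theorem eta_p_totally_positive_general (p n : ℕ) (hp : 3 ≤ p) (U : Fin p → ℝ → ℝ)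
    (g : ℝ → ℝ → (Fin (p - 2) → ℝ) → ℝ)
    (hg : ∀ x y ξ, g x y ξ =
      (Real.exp (-(U ⟨0, by omega⟩ x)) / (x + ξ ⟨0, by omega⟩)) *
        (Real.exp (-(∑ j : Fin (p - 2), U ⟨j.1 + 1, by have := j.2; omega⟩ (ξ j))) /
          ∏ j : Fin (p - 3),
            (ξ ⟨j.1, by have := j.2; omega⟩ + ξ ⟨j.1 + 1, by have := j.2; omega⟩)) *
        (Real.exp (-(U ⟨p - 1, by omega⟩ y)) / (ξ ⟨p - 3, by omega⟩ + y)))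
    (η : ℝ → ℝ → ℝ)
    (hη : ∀ x y, η x y =
      ∫ ξ in Set.univ.pi fun _ : Fin (p - 2) => Set.Ioi (0 : ℝ), g x y ξ)
    (x y : Fin n → ℝ) (hx0 : ∀ i, 0 < x i) (hy0 : ∀ i, 0 < y i)
    (hx : StrictMono x) (hy : StrictMono y)
    (hint : ∀ i j : Fin n,
      IntegrableOn (g (x i) (y j)) (Set.univ.pi fun _ : Fin (p - 2) => Set.Ioi (0 : ℝ))) :
    0 < Matrix.det (Matrix.of fun i j : Fin n => η (x i) (y j)) := by
  obtain ⟨m, rfl⟩ : ∃ m, p = m + 3 := ⟨p - 3, by omega⟩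
  let w (j : Fin (m + 1)) (z : ℝ) : ℝ := Real.exp (-U j.succ.castSucc z)
  have g_eq (x y) : g x y = fun ξ => Real.exp (-U 0 x) *
      (chainIntegrand cauchyKernel w x y ξ * Real.exp (-U (Fin.last _) y)) :=
    funext fun ξ => (hg x y ξ).trans (cauchyChain_integrand_eq U x y ξ)
  have chain_pos : StrictlyTotallyPositiveOn (fun x y =>
      ∫ ξ in univ.pi fun _ => Ioi 0, chainIntegrand cauchyKernel w x y ξ) (range x) (range y) := by
    refine cauchyChain_strictlyTotallyPositiveOn (range_subset_iff.2 hx0) (range_subset_iff.2 hy0)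
      (fun j z _ => Real.exp_pos _) ?_
    rintro _ ⟨i, rfl⟩ _ ⟨j, rfl⟩
    exact (integrable_mul_const_iff (Real.exp_ne_zero _).isUnit _).1
      ((integrable_const_mul_iff (Real.exp_ne_zero _).isUnit _).1 (g_eq (x i) (y j) ▸ hint i j))
  have η_pos := (chain_pos.mul_right fun y _ => Real.exp_pos (-U (Fin.last _) y)).mul_left
    fun x _ => Real.exp_pos (-U 0 x)
  simp only [hη, g_eq, integral_const_mul, integral_mul_const]
  exact η_pos n x y hx hy mem_range_self mem_range_self

/-- Total positivity of the convolved Cauchy kernel `η_p` of the Cauchy chain of length `p ≥ 3`. -/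
theorem eta_p_totally_positive (p n : ℕ) (hp : 3 ≤ p) (hn : 1 ≤ n)
    (U : Fin p → ℝ → ℝ) (hU : ∀ m, ContinuousOn (U m) (Set.Ioi 0))
    (g : ℝ → ℝ → (Fin (p - 2) → ℝ) → ℝ)
    (hg : ∀ x y ξ, g x y ξ =
      (Real.exp (-(U ⟨0, by omega⟩ x)) / (x + ξ ⟨0, by omega⟩)) *
        (Real.exp (-(∑ j : Fin (p - 2), U ⟨j.1 + 1, by have := j.2; omega⟩ (ξ j))) /
          ∏ j : Fin (p - 3),
            (ξ ⟨j.1, by have := j.2; omega⟩ + ξ ⟨j.1 + 1, by have := j.2; omega⟩)) *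
        (Real.exp (-(U ⟨p - 1, by omega⟩ y)) / (ξ ⟨p - 3, by omega⟩ + y)))
    (η : ℝ → ℝ → ℝ)
    (hη : ∀ x y, η x y =
      ∫ ξ in Set.univ.pi fun _ : Fin (p - 2) => Set.Ioi (0 : ℝ), g x y ξ)
    (x y : Fin n → ℝ) (hx0 : ∀ i, 0 < x i) (hy0 : ∀ i, 0 < y i)
    (hx : StrictMono x) (hy : StrictMono y)
    (hint : ∀ i j : Fin n,
      IntegrableOn (g (x i) (y j)) (Set.univ.pi fun _ : Fin (p - 2) => Set.Ioi (0 : ℝ))) :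
    0 < Matrix.det (Matrix.of fun i j : Fin n => η (x i) (y j)) :=
  eta_p_totally_positive_general p n hp U g hg η hη x y hx0 hy0 hx hy hint
end

section
/- Let n ≥ 1 and let 0 < x_1 < x_2 < ⋯ < x_n and 0 < y_1 < y_2 < ⋯ < y_n be real numbers. Then det[1/(x_i + y_j)]_{i,j=1}^n > 0. -/
/-!
The determinant is computed by Gaussian elimination: pivoting on the top left entry of a Cauchy
matrix leaves the Schur complement with entries
`(x i - x 0) / (x i + y 0) * ((y j - y 0) / (x 0 + y j)) * (1 / (x i + y j))`,
which is a smaller Cauchy matrix with rescaled rows and columns. Iterating gives Cauchy's product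
formula, in which every factor is positive when the parameters are increasing.
-/

open Finset Matrix

section Field

variable {K : Type*} [Field K] {n : ℕ}

/-- The Cauchy matrix of two families of parameters, in the sign convention `1 / (x i + y j)` rather
than `1 / (x i - y j)`. Entries with `x i + y j = 0` have the junk value `0`. -/
def cauchyMatrix {ι κ : Type*} (x : ι → K) (y : κ → K) : Matrix ι κ K :=
  of fun i j => 1 / (x i + y j)

theorem det_eq_mul_det_schurComplement_zero (A : Matrix (Fin (n + 1)) (Fin (n + 1)) K)
    (hA : A 0 0 ≠ 0) :
    A.det = A 0 0 * (of fun i j : Fin n =>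
      A i.succ j.succ - A i.succ 0 / A 0 0 * A 0 j.succ).det := by
  let c : Fin (n + 1) → K := Fin.cons 0 fun i => A i.succ 0 / A 0 0
  let B : Matrix (Fin (n + 1)) (Fin (n + 1)) K := of fun i j => A i j - c i * A 0 j
  have det_eq : A.det = B.det :=
    det_eq_of_forall_row_eq_smul_add_const c 0 rfl fun i j => by simp [B, c]
  have pivot_eq : B 0 0 = A 0 0 := by simp [B, c]
  have column_cleared (i : Fin n) : B i.succ 0 = 0 := by simp [B, c, hA]
  rw [det_eq, det_succ_column_zero, Fin.sum_univ_succ]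
  simp only [column_cleared, pivot_eq, mul_zero, zero_mul, sum_const_zero, add_zero,
    Fin.val_zero, pow_zero, one_mul, Fin.succAbove_zero]
  rfl

theorem cauchyKernel_schurComplement {a b s t : K} (hsb : s + b ≠ 0) (hat : a + t ≠ 0)
    (hst : s + t ≠ 0) :
    1 / (s + t) - 1 / (s + b) / (1 / (a + b)) * (1 / (a + t)) =
      (s - a) / (s + b) * ((t - b) / (a + t) * (1 / (s + t))) := by
  field_simp
  ring

theorem det_cauchyMatrix_succ (x y : Fin (n + 1) → K) (hxy : ∀ i j, x i + y j ≠ 0) :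
    (cauchyMatrix x y).det =
      1 / (x 0 + y 0) * ((∏ i : Fin n, (x i.succ - x 0) / (x i.succ + y 0)) *
        ((∏ j : Fin n, (y j.succ - y 0) / (x 0 + y j.succ)) *
          (cauchyMatrix (x ∘ Fin.succ) (y ∘ Fin.succ)).det)) := by
  rw [det_eq_mul_det_schurComplement_zero _ (one_div_ne_zero (hxy 0 0)), ← det_mul_row,
    ← det_mul_column]
  congr 2
  ext i j
  exact cauchyKernel_schurComplement (hxy _ _) (hxy _ _) (hxy _ _)

theorem det_cauchyMatrix (x y : Fin n → K) (hxy : ∀ i j, x i + y j ≠ 0) :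
    (cauchyMatrix x y).det =
      (∏ i, ∏ j ∈ Ioi i, (x j - x i) * (y j - y i)) / ∏ i, ∏ j, (x i + y j) := by
  induction n with
  | zero => simp
  | succ n ih =>
    rw [det_cauchyMatrix_succ x y hxy,
      ih (x ∘ Fin.succ) (y ∘ Fin.succ) fun i j => hxy i.succ j.succ]
    simp only [Fin.prod_univ_succ, Fin.prod_Ioi_zero, Fin.prod_Ioi_succ, prod_mul_distrib,
      prod_div_distrib, Function.comp_apply]
    field_simp

end Field

theorem cauchy_kernel_det_pos_general {K : Type*} [Field K] [LinearOrder K]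
    [IsStrictOrderedRing K] {n : ℕ} {x y : Fin n → K} (hx : StrictMono x) (hy : StrictMono y)
    (hxy : ∀ i j, 0 < x i + y j) : 0 < (cauchyMatrix x y).det := by
  rw [det_cauchyMatrix x y fun i j => (hxy i j).ne']
  refine div_pos (prod_pos fun i _ => prod_pos fun j hj => ?_)
    (prod_pos fun i _ => prod_pos fun j _ => hxy i j)
  have hij : i < j := mem_Ioi.mp hj
  exact mul_pos (sub_pos.mpr (hx hij)) (sub_pos.mpr (hy hij))

/-- Total positivity of the Cauchy kernel `K(x,y) = 1/(x+y)` on `(0,∞)²`. -/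
theorem cauchy_kernel_det_pos (n : ℕ) (hn : 1 ≤ n) (x y : Fin n → ℝ)
    (hx0 : ∀ i, 0 < x i) (hy0 : ∀ i, 0 < y i)
    (hx : StrictMono x) (hy : StrictMono y) :
    0 < Matrix.det (Matrix.of fun i j : Fin n => 1 / (x i + y j)) :=
  cauchy_kernel_det_pos_general hx hy fun i j => add_pos (hx0 i) (hy0 j)
end

section
/- Let I : ℕ × ℕ → ℝ be a doubly indexed family of real numbers (bimoments) and for k ≥ 1 set Δ_k = det[I_{jℓ}]_{j,ℓ=0}^{k−1}. Fix n, m ∈ ℕ with Δ_n ≠ 0 and Δ_m ≠ 0, and define the polynomials ψ_n(x) = (1/Δ_n)·det of the (n+1)×(n+1) matrix whose (j,ℓ) entry is I_{jℓ} for 0 ≤ ℓ ≤ n−1 and whose last column is (x^j)_{j=0}^n, and φ_m(y) = (1/Δ_m)·det of the (m+1)×(m+1) matrix whose (j,ℓ) entry is I_{jℓ} for 0 ≤ j ≤ m−1 and whose last row is (y^ℓ)_{ℓ=0}^m. Let B be the bilinear pairing on polynomials defined on coefficients by B(∑_j c_j x^j, ∑_k d_k y^k) = ∑_{j,k} c_j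 d_k I_{jk}. Then ψ_n and φ_m are monic of degrees n and m respectively, and B(ψ_n, φ_m) = δ_{nm} · Δ_{n+1}/Δ_n. -/
/-!
Let `A = [I_{jℓ}]_{j,ℓ ≤ n}`. By Cramer's rule the coefficients of the determinant defining `ψ_n`
are the entries of the last row of `adj A`. The identity `adj A * A = det A • 1`, read in that row,
says that the determinant pairs to zero with `y^k` for `k < n` and to `Δ_{n+1}` with `y^n`; its
leading coefficient is the corner entry `Δ_n` of `adj A`. So pairing it with a polynomial `g` of
degree at most `n` returns `Δ_{n+1}` times the coefficient of `y^n` in `g`. Transposing `I`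
exchanges the roles of `ψ` and `φ`, and `B(ψ_n, φ_m)` is evaluated from the side of larger degree.
-/

open Polynomial

section CommRing

variable {R : Type*} [CommRing R] (I : ℕ → ℕ → R)

/-- The truncated bimoment matrix `[I_{jℓ}]_{j,ℓ<k}`, whose determinant is `Δ_k`. -/
def bimomentMatrix (k : ℕ) : Matrix (Fin k) (Fin k) R :=
  Matrix.of fun j ℓ => I j ℓ

/-- The bilinear form `B` on polynomials with `B(x^j, y^k) = I_{jk}`. -/
noncomputable def bimomentForm : R[X] →ₗ[R] R[X] →ₗ[R] R :=
  lsum fun j => LinearMap.toSpanSingleton R _ (lsum fun k => LinearMap.toSpanSingleton R R (I j k))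

/-- The polynomial `Δ_n ψ_n`: the determinant of the bimoment matrix of size `n + 1` with its last
column replaced by the powers of the variable. Its counterpart `Δ_n φ_n`, with the powers in the
last row, is `borderedPoly (flip I) n`. -/
noncomputable def borderedPoly (n : ℕ) : R[X] :=
  Matrix.det (Matrix.of fun j ℓ : Fin (n + 1) =>
    if (ℓ : ℕ) = n then X ^ (j : ℕ) else C (I j ℓ))

theorem det_bimomentMatrix_flip (k : ℕ) :
    (bimomentMatrix (flip I) k).det = (bimomentMatrix I k).det :=
  Matrix.det_transpose (bimomentMatrix I k)

theorem borderedPoly_flip (n : ℕ) :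
    borderedPoly (flip I) n = Matrix.det (Matrix.of fun j ℓ : Fin (n + 1) =>
      if (j : ℕ) = n then X ^ (ℓ : ℕ) else C (I j ℓ)) := by
  rw [← Matrix.det_transpose]
  rfl

theorem bimomentForm_apply (f g : R[X]) :
    bimomentForm I f g = ∑ j ∈ Finset.range (f.natDegree + 1),
      ∑ k ∈ Finset.range (g.natDegree + 1), f.coeff j * g.coeff k * I j k := by
  simp [bimomentForm, sum_over_range, Finset.mul_sum, mul_assoc]

theorem bimomentForm_monomial (j k : ℕ) (a b : R) :
    bimomentForm I (monomial j a) (monomial k b) = a * b * I j k := by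
  simp [bimomentForm, sum_monomial_index, mul_assoc]

theorem bimomentForm_flip (f g : R[X]) : bimomentForm (flip I) f g = bimomentForm I g f := by
  rw [bimomentForm_apply, bimomentForm_apply, Finset.sum_comm]
  simp only [flip, mul_comm (f.coeff _)]

theorem borderedPoly_eq_sum_adjugate (n : ℕ) :
    borderedPoly I n = ∑ j : Fin (n + 1),
      monomial (j : ℕ) ((bimomentMatrix I (n + 1)).adjugate (Fin.last n) j) := by
  have bordered_eq_updateCol :
      (Matrix.of fun j ℓ : Fin (n + 1) => if (ℓ : ℕ) = n then (X : R[X]) ^ (j : ℕ) else C (I j ℓ)) =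
        (C.mapMatrix (bimomentMatrix I (n + 1))).updateCol (Fin.last n) fun j => X ^ (j : ℕ) := by
    ext1 j ℓ
    simp [Matrix.updateCol_apply, bimomentMatrix, Fin.ext_iff]
  rw [borderedPoly, bordered_eq_updateCol, ← Matrix.cramer_apply, Matrix.cramer_eq_adjugate_mulVec,
    ← RingHom.map_adjugate]
  simp [Matrix.mulVec, dotProduct, C_mul_X_pow_eq_monomial]

theorem natDegree_borderedPoly_le (n : ℕ) : (borderedPoly I n).natDegree ≤ n := by
  rw [borderedPoly_eq_sum_adjugate]
  exact natDegree_sum_le_of_forall_le _ _ fun j _ => (natDegree_monomial_le _).trans j.is_le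

theorem adjugate_bimomentMatrix_last_last (n : ℕ) :
    (bimomentMatrix I (n + 1)).adjugate (Fin.last n) (Fin.last n) = (bimomentMatrix I n).det := by
  rw [Matrix.adjugate_fin_succ_eq_det_submatrix, Even.neg_one_pow ⟨_, rfl⟩, one_mul]
  congr 1
  ext j ℓ
  simp [bimomentMatrix]

theorem coeff_borderedPoly_self (n : ℕ) :
    (borderedPoly I n).coeff n = (bimomentMatrix I n).det := by
  rw [borderedPoly_eq_sum_adjugate, finsetSum_coeff, Finset.sum_eq_single (Fin.last n)]
  · rw [Fin.val_last, coeff_monomial_same, adjugate_bimomentMatrix_last_last]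
  · exact fun j _ hj => coeff_monomial_of_ne _ fun h => hj (Fin.ext h.symm)
  · simp

theorem bimomentForm_borderedPoly_monomial (n : ℕ) (k : Fin (n + 1)) (b : R) :
    bimomentForm I (borderedPoly I n) (monomial k b) =
      if k = Fin.last n then b * (bimomentMatrix I (n + 1)).det else 0 := by
  set A := bimomentMatrix I (n + 1)
  calc bimomentForm I (borderedPoly I n) (monomial k b)
      = ∑ j, A.adjugate (Fin.last n) j * b * I j k := by
        simp only [borderedPoly_eq_sum_adjugate, map_sum, LinearMap.sum_apply,
          bimomentForm_monomial, A]
    _ = b * (A.adjugate * A) (Fin.last n) k := by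
        rw [Matrix.mul_apply, Finset.mul_sum]
        exact Finset.sum_congr rfl fun j _ => by rw [mul_comm _ b, mul_assoc]; rfl
    _ = if k = Fin.last n then b * A.det else 0 := by
        simp [Matrix.adjugate_mul, Matrix.one_apply, eq_comm]

theorem bimomentForm_borderedPoly_of_natDegree_le {n : ℕ} {g : R[X]} (hg : g.natDegree ≤ n) :
    bimomentForm I (borderedPoly I n) g = g.coeff n * (bimomentMatrix I (n + 1)).det := by
  conv_lhs => rw [g.as_sum_range' (n + 1) (Nat.lt_succ_of_le hg), Finset.sum_range]
  simp [bimomentForm_borderedPoly_monomial]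

theorem bimomentForm_borderedPoly_borderedPoly_flip (n m : ℕ) :
    bimomentForm I (borderedPoly I n) (borderedPoly (flip I) m) =
      if n = m then (bimomentMatrix I n).det * (bimomentMatrix I (n + 1)).det else 0 := by
  have coeff_eq_zero {J : ℕ → ℕ → R} {k l : ℕ} (h : k < l) : (borderedPoly J k).coeff l = 0 :=
    coeff_eq_zero_of_natDegree_lt ((natDegree_borderedPoly_le J k).trans_lt h)
  rcases lt_trichotomy n m with hnm | rfl | hmn
  · rw [if_neg hnm.ne, ← bimomentForm_flip, bimomentForm_borderedPoly_of_natDegree_le _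
      ((natDegree_borderedPoly_le I n).trans hnm.le), coeff_eq_zero hnm, zero_mul]
  · rw [if_pos rfl, bimomentForm_borderedPoly_of_natDegree_le _ (natDegree_borderedPoly_le _ n),
      coeff_borderedPoly_self, det_bimomentMatrix_flip]
  · rw [if_neg hmn.ne', bimomentForm_borderedPoly_of_natDegree_le _
      ((natDegree_borderedPoly_le _ m).trans hmn.le), coeff_eq_zero hmn, zero_mul]

end CommRing

section Field

variable {K : Type*} [Field K] (I : ℕ → ℕ → K)

/-- The biorthogonal polynomial `ψ_n`; its partner `φ_n` is `biorthogonalPoly (flip I) n`. It is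
monic of degree `n` when `Δ_n ≠ 0`, and is `0` when `Δ_n = 0`. -/
noncomputable def biorthogonalPoly (n : ℕ) : K[X] :=
  C (bimomentMatrix I n).det⁻¹ * borderedPoly I n

theorem natDegree_biorthogonalPoly_le (n : ℕ) : (biorthogonalPoly I n).natDegree ≤ n :=
  (natDegree_C_mul_le _ _).trans (natDegree_borderedPoly_le I n)

variable {I} {n m : ℕ}

theorem coeff_biorthogonalPoly_self (hn : (bimomentMatrix I n).det ≠ 0) :
    (biorthogonalPoly I n).coeff n = 1 := by
  rw [biorthogonalPoly, coeff_C_mul, coeff_borderedPoly_self, inv_mul_cancel₀ hn]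

theorem monic_biorthogonalPoly (hn : (bimomentMatrix I n).det ≠ 0) :
    (biorthogonalPoly I n).Monic :=
  monic_of_natDegree_le_of_coeff_eq_one n (natDegree_biorthogonalPoly_le I n)
    (coeff_biorthogonalPoly_self hn)

theorem natDegree_biorthogonalPoly (hn : (bimomentMatrix I n).det ≠ 0) :
    (biorthogonalPoly I n).natDegree = n :=
  natDegree_eq_of_le_of_coeff_ne_zero (natDegree_biorthogonalPoly_le I n)
    (by rw [coeff_biorthogonalPoly_self hn]; exact one_ne_zero)

theorem bimomentForm_biorthogonalPoly (hn : (bimomentMatrix I n).det ≠ 0) :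
    bimomentForm I (biorthogonalPoly I n) (biorthogonalPoly (flip I) m) =
      if n = m then (bimomentMatrix I (n + 1)).det / (bimomentMatrix I n).det else 0 := by
  simp only [biorthogonalPoly, ← smul_eq_C_mul, map_smul, LinearMap.smul_apply, smul_eq_mul,
    bimomentForm_borderedPoly_borderedPoly_flip, det_bimomentMatrix_flip]
  split_ifs with hnm
  · subst hnm
    field_simp
  · simp only [mul_zero]

theorem biorthogonal_polys_general (I : ℕ → ℕ → K) (Δ : ℕ → K)
    (hΔ : ∀ k, Δ k = Matrix.det (Matrix.of fun j ℓ : Fin k => I j ℓ))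
    (n m : ℕ) (hn : Δ n ≠ 0) (hm : Δ m ≠ 0) (ψ φ : K[X])
    (hψ : ψ = C (Δ n)⁻¹ * Matrix.det (Matrix.of fun j ℓ : Fin (n + 1) =>
      if (ℓ : ℕ) = n then X ^ (j : ℕ) else C (I j ℓ)))
    (hφ : φ = C (Δ m)⁻¹ * Matrix.det (Matrix.of fun j ℓ : Fin (m + 1) =>
      if (j : ℕ) = m then X ^ (ℓ : ℕ) else C (I j ℓ)))
    (B : K[X] → K[X] → K)
    (hB : ∀ f g : K[X], B f g = ∑ j ∈ Finset.range (f.natDegree + 1),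
      ∑ k ∈ Finset.range (g.natDegree + 1), f.coeff j * g.coeff k * I j k) :
    ψ.Monic ∧ ψ.natDegree = n ∧ φ.Monic ∧ φ.natDegree = m ∧
      B ψ φ = if n = m then Δ (n + 1) / Δ n else 0 := by
  obtain rfl : Δ = fun k => (bimomentMatrix I k).det := funext hΔ
  obtain rfl : ψ = biorthogonalPoly I n := hψ
  obtain rfl : φ = biorthogonalPoly (flip I) m := by
    rw [hφ, biorthogonalPoly, borderedPoly_flip, det_bimomentMatrix_flip]
  have hm_flip : (bimomentMatrix (flip I) m).det ≠ 0 := by rwa [det_bimomentMatrix_flip]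
  refine ⟨monic_biorthogonalPoly hn, natDegree_biorthogonalPoly hn,
    monic_biorthogonalPoly hm_flip, natDegree_biorthogonalPoly hm_flip, ?_⟩
  rw [hB, ← bimomentForm_apply, bimomentForm_biorthogonalPoly hn]

end Field

/-- Determinantal construction of the monic Cauchy biorthogonal polynomials and the
biorthogonality relation `B(ψ_n, φ_m) = δ_{nm} Δ_{n+1}/Δ_n`. -/
theorem biorthogonal_polys (I : ℕ → ℕ → ℝ) (Δ : ℕ → ℝ)
    (hΔ : ∀ k, Δ k = Matrix.det (Matrix.of fun j ℓ : Fin k => I j ℓ))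
    (n m : ℕ) (hn : Δ n ≠ 0) (hm : Δ m ≠ 0)
    (ψ φ : Polynomial ℝ)
    (hψ : ψ = Polynomial.C (Δ n)⁻¹ *
      Matrix.det (Matrix.of fun j ℓ : Fin (n + 1) =>
        if (ℓ : ℕ) = n then Polynomial.X ^ (j : ℕ) else Polynomial.C (I j ℓ)))
    (hφ : φ = Polynomial.C (Δ m)⁻¹ *
      Matrix.det (Matrix.of fun j ℓ : Fin (m + 1) =>
        if (j : ℕ) = m then Polynomial.X ^ (ℓ : ℕ) else Polynomial.C (I j ℓ)))
    (B : Polynomial ℝ → Polynomial ℝ → ℝ)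
    (hB : ∀ f g : Polynomial ℝ, B f g =
      ∑ j ∈ Finset.range (f.natDegree + 1), ∑ k ∈ Finset.range (g.natDegree + 1),
        f.coeff j * g.coeff k * I j k) :
    ψ.Monic ∧ ψ.natDegree = n ∧ φ.Monic ∧ φ.natDegree = m ∧
      B ψ φ = if n = m then Δ (n + 1) / Δ n else 0 :=
  biorthogonal_polys_general I Δ hΔ n m hn hm ψ φ hψ hφ B hB
end

section
/- Let t ∈ ℂ with t ∉ {0, 1, 8/7, 8/5, 2}, and define z = −(1/210) · t⁴ / ((t−1)(t−8/7)(t−8/5)(t−2)) and y = −99/2 + 210/t − 288/t² + 128/t³. Then z ≠ 0 and y⁴ − ((z−2)/(2z))·y² + (3z+4)(3z−8)²/(432 z³) = 0. -/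
/-!
With `x = 4 / t - 3` the parametrization is `2 y = T₃(x)` and `4 / (3 z) = (1 - x²) U₂(x)`, where
`T₃`, `U₂` are Chebyshev polynomials. In terms of an angle `x = cos θ` this says `2 y = cos 3θ` and
`4 / (3 z) = sin θ sin 3θ`. Eliminating `cos 3θ` by `cos² + sin² = 1` turns the quartic into a
multiple of `sin 3θ - (3 sin θ - 4 sin³ θ)`, which is zero by the triple-angle formula.
-/

open Polynomial Polynomial.Chebyshev

section CommRing

variable {R : Type*} [CommRing R]

theorem eval_chebyshevT_three (x : R) : (T R 3).eval x = 4 * x ^ 3 - 3 * x := by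
  have T_three : T R 3 = 2 * X * T R 2 - T R 1 := T_add_two R 1
  simp only [T_three, T_two, T_one, eval_sub, eval_mul, eval_pow, eval_X, eval_ofNat, eval_one]
  ring

theorem eval_chebyshevU_two (x : R) : (U R 2).eval x = 4 * x ^ 2 - 1 := by
  simp [U_two]

theorem chebyshevU_sq_add_chebyshevU_sq (n : ℤ) :
    U R n ^ 2 + U R (n + 1) ^ 2 - 2 * X * U R n * U R (n + 1) = 1 := by
  have h := congrArg (fun p : R[X] => p.comp (2 * X)) (S_sq_add_S_sq R n)
  simpa [S_comp_two_mul_X] using h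

theorem chebyshevT_sq_add_one_sub_X_sq_mul_chebyshevU_sq (n : ℤ) :
    T R (n + 1) ^ 2 + (1 - X ^ 2) * U R n ^ 2 = 1 := by
  rw [T_eq_U_sub_X_mul_U, add_sub_cancel_right]
  linear_combination chebyshevU_sq_add_chebyshevU_sq (R := R) n

/-- The quartic of the spectral curve in the coordinates `q = 4 / (3 z)` and `c = 2 y`, multiplied
by `16`. In these coordinates its coefficients are integers, so it makes sense over any ring. -/
def scaledSpectralQuartic (q c : R) : R :=
  c ^ 4 - (2 - 3 * q) * c ^ 2 + (1 + q) * (1 - 2 * q) ^ 2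

-- In the application, `v = sin² θ`, `u = sin 3θ / sin θ` and `c = cos 3θ`.
theorem scaledSpectralQuartic_eq_of_sq_add_mul_sq_eq_one {v u c : R} (h : c ^ 2 + v * u ^ 2 = 1) :
    scaledSpectralQuartic (v * u) c = v ^ 2 * u ^ 3 * (u - (3 - 4 * v)) := by
  have hc : c ^ 2 = 1 - v * u ^ 2 := eq_sub_of_add_eq h
  calc scaledSpectralQuartic (v * u) c
      = (c ^ 2) ^ 2 - (2 - 3 * (v * u)) * c ^ 2 + (1 + v * u) * (1 - 2 * (v * u)) ^ 2 := by
        rw [scaledSpectralQuartic]; ring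
    _ = v ^ 2 * u ^ 3 * (u - (3 - 4 * v)) := by rw [hc]; ring

theorem scaledSpectralQuartic_chebyshev (x : R) :
    scaledSpectralQuartic ((1 - x ^ 2) * (U R 2).eval x) ((T R 3).eval x) = 0 := by
  have pell : (T R 3).eval x ^ 2 + (1 - x ^ 2) * (U R 2).eval x ^ 2 = 1 := by
    simpa only [eval_add, eval_mul, eval_sub, eval_pow, eval_X, eval_one, Int.reduceAdd]
      using congrArg (eval x) (chebyshevT_sq_add_one_sub_X_sq_mul_chebyshevU_sq 2)
  rw [scaledSpectralQuartic_eq_of_sq_add_mul_sq_eq_one pell, eval_chebyshevU_two]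
  ring

end CommRing

section Field

variable {K : Type*} [Field K]

theorem prime_factors_ne_zero_of_two_hundred_ten_ne_zero (h210 : (210 : K) ≠ 0) :
    (2 : K) ≠ 0 ∧ (3 : K) ≠ 0 ∧ (5 : K) ≠ 0 ∧ (7 : K) ≠ 0 := by
  rw [show (210 : K) = 2 * (3 * (5 * 7)) by norm_num] at h210
  simpa only [mul_ne_zero_iff] using h210

theorem spectralQuartic_eq_scaledSpectralQuartic_div (h2 : (2 : K) ≠ 0) (h3 : (3 : K) ≠ 0)
    {z : K} (hz : z ≠ 0) (y : K) :
    y ^ 4 - (z - 2) / (2 * z) * y ^ 2 + (3 * z + 4) * (3 * z - 8) ^ 2 / (432 * z ^ 3) =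
      scaledSpectralQuartic (4 / (3 * z)) (2 * y) / 16 := by
  rw [scaledSpectralQuartic, show (432 : K) = 2 ^ 4 * 3 ^ 3 by norm_num,
    show (16 : K) = 2 ^ 4 by norm_num]
  field_simp
  ring

theorem two_mul_uniformizing_y_eq_eval_chebyshevT (h2 : (2 : K) ≠ 0) {t : K} (ht : t ≠ 0) :
    2 * (-99 / 2 + 210 / t - 288 / t ^ 2 + 128 / t ^ 3) = (T K 3).eval (4 / t - 3) := by
  rw [eval_chebyshevT_three]
  field_simp
  ring

theorem four_div_three_mul_uniformizing_z_eq_one_sub_sq_mul_eval_chebyshevU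
    (h210 : (210 : K) ≠ 0) {t : K} (ht : t ≠ 0) :
    4 / (3 * (-(1 / 210) * t ^ 4 / ((t - 1) * (t - 8 / 7) * (t - 8 / 5) * (t - 2)))) =
      (1 - (4 / t - 3) ^ 2) * (U K 2).eval (4 / t - 3) := by
  obtain ⟨-, h3, h5, h7⟩ := prime_factors_ne_zero_of_two_hundred_ten_ne_zero h210
  rw [eval_chebyshevU_two, ← mul_div_assoc, div_div_eq_mul_div]
  field_simp
  ring

theorem spectral_curve_uniformization_general (h210 : (210 : K) ≠ 0) (t : K)
    (h0 : t ≠ 0) (h1 : t ≠ 1) (h2 : t ≠ 8 / 7) (h3 : t ≠ 8 / 5) (h4 : t ≠ 2)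
    (z y : K)
    (hz : z = -(1 / 210) * t ^ 4 / ((t - 1) * (t - 8 / 7) * (t - 8 / 5) * (t - 2)))
    (hy : y = -99 / 2 + 210 / t - 288 / t ^ 2 + 128 / t ^ 3) :
    z ≠ 0 ∧
      y ^ 4 - (z - 2) / (2 * z) * y ^ 2 +
        (3 * z + 4) * (3 * z - 8) ^ 2 / (432 * z ^ 3) = 0 := by
  obtain ⟨two_ne, three_ne, -, -⟩ := prime_factors_ne_zero_of_two_hundred_ten_ne_zero h210
  have z_ne : z ≠ 0 := by
    rw [hz]
    simp [h210, h0, sub_ne_zero, h1, h2, h3, h4]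
  refine ⟨z_ne, ?_⟩
  rw [spectralQuartic_eq_scaledSpectralQuartic_div two_ne three_ne z_ne, hz, hy,
    four_div_three_mul_uniformizing_z_eq_one_sub_sq_mul_eval_chebyshevU h210 h0,
    two_mul_uniformizing_y_eq_eval_chebyshevT two_ne h0,
    scaledSpectralQuartic_chebyshev, zero_div]

end Field

/-- The rational uniformization of the genus-zero spectral curve of the
Cauchy–Laguerre three-chain. -/
theorem spectral_curve_uniformization (t : ℂ)
    (h0 : t ≠ 0) (h1 : t ≠ 1) (h2 : t ≠ 8 / 7) (h3 : t ≠ 8 / 5) (h4 : t ≠ 2)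
    (z y : ℂ)
    (hz : z = -(1 / 210) * t ^ 4 / ((t - 1) * (t - 8 / 7) * (t - 8 / 5) * (t - 2)))
    (hy : y = -99 / 2 + 210 / t - 288 / t ^ 2 + 128 / t ^ 3) :
    z ≠ 0 ∧
      y ^ 4 - (z - 2) / (2 * z) * y ^ 2 +
        (3 * z + 4) * (3 * z - 8) ^ 2 / (432 * z ^ 3) = 0 :=
  spectral_curve_uniformization_general (by norm_num) t h0 h1 h2 h3 h4 z y hz hy
end

section
/- Let b = 64/27. For every real z > b, the integral ∫_{b}^{z} ( √(λ² + 2√(λ(λ−b)) − 2λ) + √(λ² − 2√(λ(λ−b)) − 2λ) ) · (1/λ) dλ is strictly positive; here both radicands are nonnegative for all λ ∈ [b, z]. Consequently ω_{12}(z) := −(1/2)·∫_{b}^{z} ( √(λ² + 2√(λ(λ−b)) − 2λ) + √(λ² − 2√(λ(λ−b)) − 2λ) ) (1/λ) dλ satisfies ω_{12}(z) < 0 for all z > b. -/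
/-!
Squaring reduces nonnegativity of the smaller radicand to the polynomial inequality
`l (l - 64/27) ≤ (l (l - 2) / 2)²`, which holds for `l ≥ 0` because of the double root in
`(l (l - 2) / 2)² - l (l - 64/27) = l (l - 8/3)² (l + 4/3) / 4`.
The larger radicand is at least `l (l - 2)`, which is positive because `64/27 > 2`. So the
integrand is continuous and strictly positive on the interval of integration.
-/

open Real Set

/-- The larger radicand `λ² + 2√(λ(λ - b)) - 2λ`, with `b = 64/27`, in the integral representation
of `ω₁₂`. -/
noncomputable def radicandPlus (l : ℝ) : ℝ := l ^ 2 + 2 * √(l * (l - 64 / 27)) - 2 * l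

/-- The smaller radicand `λ² - 2√(λ(λ - b)) - 2λ`, with `b = 64/27`, in the integral representation
of `ω₁₂`. -/
noncomputable def radicandMinus (l : ℝ) : ℝ := l ^ 2 - 2 * √(l * (l - 64 / 27)) - 2 * l

/-- The function whose integral over `[b, z]` is `-2 ω₁₂(z)`. -/
noncomputable def omega12Integrand (l : ℝ) : ℝ :=
  (√(radicandPlus l) + √(radicandMinus l)) * (1 / l)

lemma half_mul_sub_two_sq_sub_eq {K : Type*} [Field K] [CharZero K] (l : K) :
    (l * (l - 2) / 2) ^ 2 - l * (l - 64 / 27) = l * (l - 8 / 3) ^ 2 * (l + 4 / 3) / 4 := by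
  ring

lemma mul_sub_le_half_mul_sub_two_sq {K : Type*} [Field K] [LinearOrder K] [IsStrictOrderedRing K]
    {l : K} (hl : 0 ≤ l) : l * (l - 64 / 27) ≤ (l * (l - 2) / 2) ^ 2 := by
  rw [← sub_nonneg, half_mul_sub_two_sq_sub_eq]
  positivity

-- For `2 ≤ l < 64 / 27` the argument of the square root is negative and the left-hand side is `0`.
lemma sqrt_mul_sub_le_half_mul_sub_two {l : ℝ} (hl : 2 ≤ l) :
    √(l * (l - 64 / 27)) ≤ l * (l - 2) / 2 := by
  have hl₀ : 0 ≤ l := by linarith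
  have hnonneg : 0 ≤ l * (l - 2) / 2 :=
    div_nonneg (mul_nonneg hl₀ (sub_nonneg.mpr hl)) zero_le_two
  exact sqrt_le_iff.mpr ⟨hnonneg, mul_sub_le_half_mul_sub_two_sq hl₀⟩

lemma radicandMinus_nonneg {l : ℝ} (hl : 2 ≤ l) : 0 ≤ radicandMinus l := by
  unfold radicandMinus
  linarith [sqrt_mul_sub_le_half_mul_sub_two hl]

lemma mul_sub_two_le_radicandPlus (l : ℝ) : l * (l - 2) ≤ radicandPlus l := by
  unfold radicandPlus
  linarith [sqrt_nonneg (l * (l - 64 / 27))]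

lemma radicandPlus_pos {l : ℝ} (hl : 2 < l) : 0 < radicandPlus l :=
  (mul_pos (by linarith) (sub_pos.mpr hl)).trans_le (mul_sub_two_le_radicandPlus l)

lemma omega12Integrand_pos {l : ℝ} (hl : 2 < l) : 0 < omega12Integrand l := by
  have hl₀ : 0 < l := by linarith
  have hsqrt : 0 < √(radicandPlus l) := sqrt_pos.mpr (radicandPlus_pos hl)
  exact mul_pos (add_pos_of_pos_of_nonneg hsqrt (sqrt_nonneg _)) (one_div_pos.mpr hl₀)

lemma continuousOn_omega12Integrand : ContinuousOn omega12Integrand {0}ᶜ := by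
  unfold omega12Integrand radicandPlus radicandMinus
  exact ContinuousOn.mul (by fun_prop)
    (continuousOn_const.div continuousOn_id fun _ hl ↦ hl)

lemma integral_omega12Integrand_pos {a z : ℝ} (ha : 2 ≤ a) (haz : a < z) :
    0 < ∫ l in a..z, omega12Integrand l := by
  have hcont : ContinuousOn omega12Integrand (uIcc a z) := by
    refine continuousOn_omega12Integrand.mono fun l hl ↦ ?_
    rw [uIcc_of_le haz.le] at hl
    exact (by linarith [hl.1] : 0 < l).ne'
  exact intervalIntegral.intervalIntegral_pos_of_pos_on hcont.intervalIntegrable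
    (fun l hl ↦ omega12Integrand_pos (ha.trans_lt hl.1)) haz

/-- Strict negativity of `ω_{12}(z)` for `z > b = 64/27` for the Cauchy–Laguerre
three-chain. -/
theorem omega12_neg (z : ℝ) (hz : 64 / 27 < z) :
    (∀ l ∈ Set.Icc (64 / 27 : ℝ) z,
      0 ≤ l ^ 2 + 2 * Real.sqrt (l * (l - 64 / 27)) - 2 * l ∧
      0 ≤ l ^ 2 - 2 * Real.sqrt (l * (l - 64 / 27)) - 2 * l) ∧
    (0 < ∫ l in (64 / 27 : ℝ)..z,
      (Real.sqrt (l ^ 2 + 2 * Real.sqrt (l * (l - 64 / 27)) - 2 * l) +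
        Real.sqrt (l ^ 2 - 2 * Real.sqrt (l * (l - 64 / 27)) - 2 * l)) * (1 / l)) ∧
    (-(1 / 2) * ∫ l in (64 / 27 : ℝ)..z,
      (Real.sqrt (l ^ 2 + 2 * Real.sqrt (l * (l - 64 / 27)) - 2 * l) +
        Real.sqrt (l ^ 2 - 2 * Real.sqrt (l * (l - 64 / 27)) - 2 * l)) * (1 / l)) < 0 := by
  have two_lt_b : (2 : ℝ) < 64 / 27 := by norm_num
  have hpos : 0 < ∫ l in (64 / 27 : ℝ)..z, omega12Integrand l :=
    integral_omega12Integrand_pos two_lt_b.le hz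
  refine ⟨fun l hl ↦ ?_, hpos, mul_neg_of_neg_of_pos (by norm_num) hpos⟩
  have two_lt_l : 2 < l := two_lt_b.trans_le hl.1
  exact ⟨(radicandPlus_pos two_lt_l).le, radicandMinus_nonneg two_lt_l.le⟩
end

section
/- Let a = −4/3 and b = 64/27. For every real z < a, the integral ∫_{z}^{a} √(λ² − 2√(λ(λ−b)) − 2λ) · (1/(−λ)) dλ is strictly positive; here λ(λ−b) > 0 and the radicand λ² − 2√(λ(λ−b)) − 2λ is nonnegative for all λ ∈ [z, a], vanishing only at λ = a. Consequently ω_{23}(z) := −∫_{z}^{a} √(λ² − 2√(λ(λ−b)) − 2λ)(1/|λ|) dλ satisfies ω_{23}(z) < 0 for all z < a. -/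
/-!
For `l < 0` the radicand is the difference of the positive number `l² - 2l` and `2√(l(l - b))`, so
its sign is that of the difference of squares `(l² - 2l)² - 4l(l - b) = l(l³ - 4l² + 4b)`. The value
`b = 64/27` is the one for which the cubic has a positive double root: there it equals
`(l - 8/3)²(l + 4/3)`, which changes sign on the negative axis only at the branch point `-4/3`.
-/

open Set

/-- The radicand `l² - 2√(l(l - b)) - 2l` in the integrand of `ω_{23}`, with the right branch point
`b` kept as a parameter. -/
noncomputable def omega23Radicand (b l : ℝ) : ℝ :=
  l ^ 2 - 2 * √(l * (l - b)) - 2 * l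

lemma continuous_omega23Radicand (b : ℝ) : Continuous (omega23Radicand b) := by
  unfold omega23Radicand
  fun_prop

section Radicand

variable {b l : ℝ}

lemma omega23Radicand_eq_two_mul_sub_sqrt (b l : ℝ) :
    omega23Radicand b l = 2 * ((l ^ 2 - 2 * l) / 2 - √(l * (l - b))) := by
  unfold omega23Radicand
  ring

lemma half_sq_sub_two_mul_sq_sub_eq_mul_cubic (b l : ℝ) :
    ((l ^ 2 - 2 * l) / 2) ^ 2 - l * (l - b) = l / 4 * (l ^ 3 - 4 * l ^ 2 + 4 * b) := by
  ring

lemma half_sq_sub_two_mul_pos (hl : l < 0) : 0 < (l ^ 2 - 2 * l) / 2 := by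
  linarith [sq_nonneg l]

lemma omega23Radicand_pos_iff_cubic_neg (hl : l < 0) :
    0 < omega23Radicand b l ↔ l ^ 3 - 4 * l ^ 2 + 4 * b < 0 := by
  rw [omega23Radicand_eq_two_mul_sub_sqrt, mul_pos_iff_of_pos_left two_pos, sub_pos,
    Real.sqrt_lt' (half_sq_sub_two_mul_pos hl), ← sub_pos, half_sq_sub_two_mul_sq_sub_eq_mul_cubic,
    ← smul_eq_mul, smul_pos_iff_of_neg_left (by linarith)]

lemma omega23Radicand_eq_zero_iff_cubic_eq_zero (hl : l < 0) :
    omega23Radicand b l = 0 ↔ l ^ 3 - 4 * l ^ 2 + 4 * b = 0 := by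
  rw [omega23Radicand_eq_two_mul_sub_sqrt, mul_eq_zero_iff_left two_ne_zero, sub_eq_zero, eq_comm,
    Real.sqrt_eq_iff_mul_self_eq_of_pos (half_sq_sub_two_mul_pos hl), ← pow_two, ← sub_eq_zero,
    half_sq_sub_two_mul_sq_sub_eq_mul_cubic, mul_eq_zero_iff_left (by linarith)]

lemma cubic_eq_sq_mul (l : ℝ) :
    l ^ 3 - 4 * l ^ 2 + 4 * (64 / 27) = (l - 8 / 3) ^ 2 * (l + 4 / 3) := by
  ring

lemma omega23Radicand_pos_iff (hl : l < 0) : 0 < omega23Radicand (64 / 27) l ↔ l < -4 / 3 := by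
  have hsq : 0 < (l - 8 / 3) ^ 2 := sq_pos_of_neg (by linarith)
  rw [omega23Radicand_pos_iff_cubic_neg hl, cubic_eq_sq_mul, ← smul_eq_mul,
    smul_neg_iff_of_pos_left hsq, ← lt_neg_iff_add_neg, neg_div]

lemma omega23Radicand_eq_zero_iff (hl : l < 0) :
    omega23Radicand (64 / 27) l = 0 ↔ l = -4 / 3 := by
  have hsq : (l - 8 / 3) ^ 2 ≠ 0 := (sq_pos_of_neg (by linarith)).ne'
  rw [omega23Radicand_eq_zero_iff_cubic_eq_zero hl, cubic_eq_sq_mul, mul_eq_zero_iff_left hsq,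
    add_eq_zero_iff_eq_neg, neg_div]

lemma omega23Radicand_nonneg_iff (hl : l < 0) :
    0 ≤ omega23Radicand (64 / 27) l ↔ l ≤ -4 / 3 := by
  rw [le_iff_lt_or_eq, eq_comm, omega23Radicand_pos_iff hl, omega23Radicand_eq_zero_iff hl,
    le_iff_lt_or_eq]

end Radicand

section Integral

variable {f : ℝ → ℝ} {z a : ℝ}

lemma integral_mul_one_div_neg_pos (hza : z < a) (ha : a < 0) (hf : ContinuousOn f (Icc z a))
    (hpos : ∀ l ∈ Ioo z a, 0 < f l) : 0 < ∫ l in z..a, f l * (1 / (-l)) := by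
  have hne : ∀ l ∈ Icc z a, -l ≠ 0 := fun l hl => neg_ne_zero.2 (hl.2.trans_lt ha).ne
  have hcont : ContinuousOn (fun l => f l * (1 / (-l))) (Icc z a) :=
    hf.mul (continuousOn_const.div continuousOn_neg hne)
  refine intervalIntegral.intervalIntegral_pos_of_pos_on
    (hcont.intervalIntegrable_of_Icc hza.le) (fun l hl => ?_) hza
  exact mul_pos (hpos l hl) (one_div_pos.2 (neg_pos.2 (hl.2.trans ha)))

lemma integral_mul_one_div_abs_of_neg (hz : z < 0) (ha : a < 0) :
    ∫ l in z..a, f l * (1 / |l|) = ∫ l in z..a, f l * (1 / (-l)) := by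
  refine intervalIntegral.integral_congr fun l hl => ?_
  have hl_neg : l < 0 := hl.2.trans_lt (max_lt hz ha)
  simp only [abs_of_neg hl_neg]

end Integral

/-- Strict negativity of `ω_{23}(z)` for `z < a = −4/3` for the Cauchy–Laguerre
three-chain. -/
theorem omega23_neg (z : ℝ) (hz : z < -4 / 3) :
    (∀ l ∈ Set.Icc z (-4 / 3 : ℝ),
      0 < l * (l - 64 / 27) ∧
      0 ≤ l ^ 2 - 2 * Real.sqrt (l * (l - 64 / 27)) - 2 * l ∧
      (l ^ 2 - 2 * Real.sqrt (l * (l - 64 / 27)) - 2 * l = 0 ↔ l = -4 / 3)) ∧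
    (0 < ∫ l in z..(-4 / 3 : ℝ),
      Real.sqrt (l ^ 2 - 2 * Real.sqrt (l * (l - 64 / 27)) - 2 * l) * (1 / (-l))) ∧
    (-(∫ l in z..(-4 / 3 : ℝ),
      Real.sqrt (l ^ 2 - 2 * Real.sqrt (l * (l - 64 / 27)) - 2 * l) * (1 / |l|))) < 0 := by
  have ha : (-4 / 3 : ℝ) < 0 := by norm_num
  have hpos : 0 < ∫ l in z..(-4 / 3 : ℝ), √(omega23Radicand (64 / 27) l) * (1 / (-l)) :=
    integral_mul_one_div_neg_pos hz ha (continuous_omega23Radicand _).sqrt.continuousOn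
      fun l hl => Real.sqrt_pos.2 ((omega23Radicand_pos_iff (hl.2.trans ha)).2 hl.2)
  refine ⟨fun l hl => ?_, hpos, ?_⟩
  · have hl_neg : l < 0 := hl.2.trans_lt ha
    exact ⟨mul_pos_of_neg_of_neg hl_neg (by linarith), (omega23Radicand_nonneg_iff hl_neg).2 hl.2,
      omega23Radicand_eq_zero_iff hl_neg⟩
  · rw [neg_lt_zero, integral_mul_one_div_abs_of_neg (hz.trans ha) ha]
    exact hpos
end

section
/- Let N ≥ 1 be an integer, let x_0, x_1, …, x_N be real numbers such that x_m − x_n ∉ ℤ for all m ≠ n, and let ε ∈ {0, 1} satisfy ε + N + 1 ≡ 0 (mod 2). Then ∑_{m=0}^{N} exp(iπ ε x_m) · ∏_{n ≠ m} ( sin(π(x_m − x_n)) )^{−1} = 0, the sines being nonzero by hypothesis. -/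
/-!
With `w i = exp (iπ x i)` one has `sin (π (x i - x j)) = (w i / w j - w j / w i) / 2i`, so up to a
common factor the `i`-th summand is `w i ^ (ε + #s - 2) / ∏ j ≠ i, (w i ^ 2 - w j ^ 2)`. By parity
its numerator is `(w i ^ 2) ^ k` for some `k < #s - 1`, and the sum is then the coefficient of
`X ^ (#s - 1)` in the Lagrange interpolant of `X ^ k` at the nodes `w i ^ 2`, that is, in `X ^ k`
itself.
-/

section Field

variable {ι K : Type*} [DecidableEq ι] [Field K] {s : Finset ι}

lemma sum_pow_div_prod_sub_eq_zero {v : ι → K} (hv : Set.InjOn v s) {k : ℕ} (hk : k + 1 < s.card) :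
    ∑ i ∈ s, v i ^ k / ∏ j ∈ s.erase i, (v i - v j) = 0 := by
  have hdeg : (Polynomial.X ^ k : Polynomial K).degree < s.card := by
    rw [Polynomial.degree_X_pow]
    exact_mod_cast k.lt_succ_self.trans hk
  have hcoeff := Lagrange.coeff_eq_sum hv hdeg
  rw [Polynomial.coeff_X_pow, if_neg (by omega)] at hcoeff
  simpa using hcoeff.symm

lemma inv_div_sub_div {a b : K} (ha : a ≠ 0) (hb : b ≠ 0) :
    (a / b - b / a)⁻¹ = a * b / (a ^ 2 - b ^ 2) := by
  rw [div_sub_div _ _ hb ha, inv_div, mul_comm b a, sq, sq]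

lemma prod_erase_inv_div_sub_div {w : ι → K} (hw : ∀ i ∈ s, w i ≠ 0) {i : ι} (hi : i ∈ s) :
    ∏ j ∈ s.erase i, (w i / w j - w j / w i)⁻¹ =
      (∏ j ∈ s, w j) * w i ^ ((s.card : ℤ) - 2) / ∏ j ∈ s.erase i, (w i ^ 2 - w j ^ 2) := by
  have hfactor : ∀ j ∈ s.erase i,
      (w i / w j - w j / w i)⁻¹ = w i * w j / (w i ^ 2 - w j ^ 2) := fun j hj ↦
    inv_div_sub_div (hw i hi) (hw j (Finset.mem_of_mem_erase hj))
  have hpow : w i ^ (s.erase i).card = w i * w i ^ ((s.card : ℤ) - 2) := by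
    rw [← zpow_one_add₀ (hw i hi), ← zpow_natCast, Finset.cast_card_erase_of_mem hi]
    congr 1
    ring
  rw [Finset.prod_congr rfl hfactor, Finset.prod_div_distrib, Finset.prod_mul_distrib,
    Finset.prod_const, hpow, ← Finset.mul_prod_erase s w hi]
  ring

lemma sum_zpow_mul_prod_inv_div_sub_div_eq_zero {w : ι → K} (hw : ∀ i ∈ s, w i ≠ 0)
    (hinj : Set.InjOn (fun i ↦ w i ^ 2) s) {ε : ℤ} (hε : |ε| < s.card)
    (hpar : Even (ε + s.card)) :
    ∑ i ∈ s, w i ^ ε * ∏ j ∈ s.erase i, (w i / w j - w j / w i)⁻¹ = 0 := by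
  obtain ⟨hlower, hupper⟩ := abs_lt.mp hε
  obtain ⟨k, hk⟩ : ∃ k : ℕ, ε + (s.card - 2) = 2 * k := by
    obtain ⟨l, hl⟩ := hpar
    exact ⟨(l - 1).toNat, by omega⟩
  have hterm : ∀ i ∈ s, w i ^ ε * ∏ j ∈ s.erase i, (w i / w j - w j / w i)⁻¹ =
      (∏ j ∈ s, w j) * ((w i ^ 2) ^ k / ∏ j ∈ s.erase i, (w i ^ 2 - w j ^ 2)) := by
    intro i hi
    have hpow : w i ^ ε * w i ^ ((s.card : ℤ) - 2) = (w i ^ 2) ^ k := by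
      rw [← zpow_add₀ (hw i hi), hk, ← pow_mul]
      exact_mod_cast zpow_natCast (w i) (2 * k)
    rw [prod_erase_inv_div_sub_div hw hi, ← hpow]
    ring
  rw [Finset.sum_congr rfl hterm, ← Finset.mul_sum,
    sum_pow_div_prod_sub_eq_zero hinj (by omega), mul_zero]

end Field

section Trigonometric

open Complex
open scoped Real

lemma sin_pi_mul_sub_eq_exp_div_sub_div (a b : ℂ) :
    sin (π * (a - b)) =
      (2 * I)⁻¹ * (exp (I * π * a) / exp (I * π * b) - exp (I * π * b) / exp (I * π * a)) := by
  rw [← exp_sub, ← exp_sub, ← mul_sub, ← mul_sub, ← neg_sub a b, mul_inv, inv_I, sin]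
  ring_nf

lemma exp_I_mul_pi_mul_sq_eq_iff {a b : ℂ} :
    exp (I * π * a) ^ 2 = exp (I * π * b) ^ 2 ↔ ∃ k : ℤ, a - b = k := by
  rw [← exp_nat_mul, ← exp_nat_mul, exp_eq_exp_iff_exists_int]
  refine exists_congr fun k ↦ ?_
  rw [← mul_right_inj' two_pi_I_ne_zero (b := a - b)]
  push_cast
  constructor <;> intro h <;> linear_combination h

theorem residue_sum_identity_general {ι : Type*} [DecidableEq ι] {s : Finset ι} {x : ι → ℂ}
    (hx : (s : Set ι).Pairwise fun i j ↦ ∀ k : ℤ, x i - x j ≠ k) {ε : ℤ} (hε : |ε| < s.card)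
    (hpar : Even (ε + s.card)) :
    ∑ i ∈ s, exp (I * π * ε * x i) * ∏ j ∈ s.erase i, (sin (π * (x i - x j)))⁻¹ = 0 := by
  set w : ι → ℂ := fun i ↦ exp (I * π * x i)
  have hinj : Set.InjOn (fun i ↦ w i ^ 2) s := fun i hi j hj hij ↦ by
    by_contra hne
    obtain ⟨k, hk⟩ := exp_I_mul_pi_mul_sq_eq_iff.mp hij
    exact hx hi hj hne k hk
  have hterm : ∀ i ∈ s, exp (I * π * ε * x i) * ∏ j ∈ s.erase i, (sin (π * (x i - x j)))⁻¹ =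
      (2 * I) ^ (s.card - 1) * (w i ^ ε * ∏ j ∈ s.erase i, (w i / w j - w j / w i)⁻¹) := by
    intro i hi
    have hexp : exp (I * π * ε * x i) = w i ^ ε := by
      rw [← exp_int_mul]
      ring_nf
    simp_rw [hexp, sin_pi_mul_sub_eq_exp_div_sub_div, mul_inv_rev (2 * I)⁻¹, inv_inv]
    rw [Finset.prod_mul_distrib, Finset.prod_const, Finset.card_erase_of_mem hi]
    ring
  rw [Finset.sum_congr rfl hterm, ← Finset.mul_sum,
    sum_zpow_mul_prod_inv_div_sub_div_eq_zero (fun i _ ↦ exp_ne_zero _) hinj hε hpar, mul_zero]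

end Trigonometric

/-- The residue-sum trigonometric identity used in the evaluation of the bilinear
concomitant pairing of the Meijer-G–type solutions. -/
theorem residue_sum_identity (N : ℕ) (hN : 1 ≤ N) (x : ℕ → ℝ)
    (hx : ∀ m ≤ N, ∀ n ≤ N, m ≠ n → ∀ k : ℤ, x m - x n ≠ (k : ℝ))
    (ε : ℕ) (hε : ε = 0 ∨ ε = 1) (hpar : (ε + N + 1) % 2 = 0) :
    ∑ m ∈ Finset.range (N + 1),
      Complex.exp (Complex.I * (Real.pi : ℂ) * (ε : ℂ) * (x m : ℂ)) *
        ∏ n ∈ (Finset.range (N + 1)).erase m,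
          ((Real.sin (Real.pi * (x m - x n)) : ℂ))⁻¹ = 0 := by
  have hpairwise : (Finset.range (N + 1) : Set ℕ).Pairwise
      fun m n ↦ ∀ k : ℤ, (x m : ℂ) - x n ≠ k := fun m hm n hn hmn k hk ↦
    hx m (Finset.mem_range_succ_iff.mp hm) n (Finset.mem_range_succ_iff.mp hn) hmn k
      (by exact_mod_cast hk)
  simpa using residue_sum_identity_general hpairwise (ε := ε)
    (by rw [Finset.card_range, Nat.abs_cast]; omega)
    (by rw [Finset.card_range, Int.even_iff]; omega)
end

section
/- For every real β > 0, the cubic polynomial P_β(q) = 27(1+β)² q³ − 16(9β² + 9β + 4) q² + 16β²(β² + β + 8) q − 64β⁴ has exactly one real root, and this root is strictly positive. -/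
/-!
The discriminant of the cubic is `-β ^ 5` times a polynomial in `β` with positive coefficients,
hence negative. After division by `X - x` for a root `x`, the discriminant of a cubic is a square
multiple of that of the quadratic quotient, so two distinct real roots would make it nonnegative.
Thus the root provided by the odd degree is the only one; it is positive because the signs of the
coefficients alternate.
-/

open Polynomial Filter

theorem exists_isRoot_of_odd_natDegree {p : ℝ[X]} (hp : Odd p.natDegree) : ∃ x, p.IsRoot x := by
  wlog hlead : 0 ≤ p.leadingCoeff generalizing p
  · obtain ⟨x, hx⟩ := this (p := -p) (by rwa [natDegree_neg]) (by
      rw [leadingCoeff_neg]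
      linarith)
    exact ⟨x, by simpa using hx⟩
  have hdeg : 0 < p.degree := natDegree_pos_iff_degree_pos.mp hp.pos
  have tendsto_top : Tendsto (fun x ↦ p.eval x) atTop atTop :=
    p.tendsto_atTop_of_leadingCoeff_nonneg hdeg hlead
  have tendsto_bot : Tendsto (fun x ↦ p.eval x) atBot atBot := by
    have hreflect : Tendsto (fun x ↦ (p.comp (-X)).eval x) atTop atBot := by
      refine tendsto_atBot_of_leadingCoeff_nonpos _ (by simpa using hdeg) ?_
      simpa [hp.neg_one_pow] using hlead
    simpa [Function.comp_def] using hreflect.comp tendsto_neg_atBot_atTop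
  exact p.continuous.surjective tendsto_top tendsto_bot 0

theorem isRoot_toPoly_iff {R : Type*} [Semiring R] {P : Cubic R} {x : R} :
    P.toPoly.IsRoot x ↔ P.a * x ^ 3 + P.b * x ^ 2 + P.c * x + P.d = 0 := by
  simp [Cubic.toPoly]

section Discriminant

variable {R : Type*} [CommRing R] {P : Cubic R} {x y : R}

theorem discr_eq_sq_mul_discrim_of_isRoot (hx : P.toPoly.IsRoot x) :
    P.discr = P.toPoly.derivative.eval x ^ 2 *
      discrim P.a (P.a * x + P.b) (P.a * x ^ 2 + P.b * x + P.c) := by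
  have hd : P.d = -(P.a * x ^ 3 + P.b * x ^ 2 + P.c * x) := by
    linear_combination isRoot_toPoly_iff.mp hx
  have hderiv : P.toPoly.derivative.eval x = 3 * P.a * x ^ 2 + 2 * P.b * x + P.c := by
    simp only [Cubic.toPoly, derivative_add, derivative_C_mul, derivative_X_pow, derivative_X,
      derivative_C, eval_add, eval_mul, eval_C, eval_pow, eval_X, eval_one, eval_zero]
    push_cast
    ring
  rw [Cubic.discr, discrim, hderiv, hd]
  ring

theorem quadratic_quotient_eq_zero_of_isRoot_of_ne [NoZeroDivisors R] (hx : P.toPoly.IsRoot x)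
    (hy : P.toPoly.IsRoot y) (hxy : x ≠ y) :
    P.a * (y * y) + (P.a * x + P.b) * y + (P.a * x ^ 2 + P.b * x + P.c) = 0 := by
  refine (mul_eq_zero.mp ?_).resolve_left (sub_ne_zero.mpr hxy)
  linear_combination isRoot_toPoly_iff.mp hx - isRoot_toPoly_iff.mp hy

theorem isSquare_discr_of_isRoot_of_ne [NoZeroDivisors R] (hx : P.toPoly.IsRoot x)
    (hy : P.toPoly.IsRoot y) (hxy : x ≠ y) : IsSquare P.discr := by
  rw [discr_eq_sq_mul_discrim_of_isRoot hx,
    discrim_eq_sq_of_quadratic_eq_zero (quadratic_quotient_eq_zero_of_isRoot_of_ne hx hy hxy)]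
  exact (IsSquare.sq _).mul (IsSquare.sq _)

end Discriminant

theorem existsUnique_isRoot_of_discr_neg {P : Cubic ℝ} (ha : P.a ≠ 0) (hP : P.discr < 0) :
    ∃! x, P.toPoly.IsRoot x := by
  obtain ⟨x, hx⟩ : ∃ x, P.toPoly.IsRoot x :=
    exists_isRoot_of_odd_natDegree (by rw [Cubic.natDegree_of_a_ne_zero ha]; decide)
  refine ⟨x, hx, fun y hy ↦ ?_⟩
  by_contra hyx
  exact hP.not_ge (isSquare_discr_of_isRoot_of_ne hy hx hyx).nonneg

theorem pos_of_isRoot_of_alternating_signs {R : Type*} [CommRing R] [LinearOrder R]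
    [IsStrictOrderedRing R] {P : Cubic R} {x : R} (ha : 0 ≤ P.a) (hb : P.b ≤ 0) (hc : 0 ≤ P.c)
    (hd : P.d < 0) (hx : P.toPoly.IsRoot x) : 0 < x := by
  by_contra! hx0
  have cubic_nonpos : P.a * x ^ 3 ≤ 0 :=
    mul_nonpos_of_nonneg_of_nonpos ha (Odd.pow_nonpos (by decide) hx0)
  have quadratic_nonpos : P.b * x ^ 2 ≤ 0 := mul_nonpos_of_nonpos_of_nonneg hb (sq_nonneg x)
  have linear_nonpos : P.c * x ≤ 0 := mul_nonpos_of_nonneg_of_nonpos hc hx0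
  linarith [isRoot_toPoly_iff.mp hx]

/-- The cubic `P_β` whose root is the right endpoint `q(β)` of the support of the equilibrium
measures. -/
def endpointCubic {R : Type*} [CommRing R] (β : R) : Cubic R where
  a := 27 * (1 + β) ^ 2
  b := -(16 * (9 * β ^ 2 + 9 * β + 4))
  c := 16 * β ^ 2 * (β ^ 2 + β + 8)
  d := -(64 * β ^ 4)

theorem isRoot_endpointCubic_iff {R : Type*} [CommRing R] {β q : R} :
    (endpointCubic β).toPoly.IsRoot q ↔
      27 * (1 + β) ^ 2 * q ^ 3 - 16 * (9 * β ^ 2 + 9 * β + 4) * q ^ 2 +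
        16 * β ^ 2 * (β ^ 2 + β + 8) * q - 64 * β ^ 4 = 0 := by
  simp only [isRoot_toPoly_iff, endpointCubic, neg_mul, sub_eq_add_neg]

theorem discr_endpointCubic {R : Type*} [CommRing R] (β : R) :
    (endpointCubic β).discr =
      -(4096 * β ^ 5 * (108 * β ^ 9 + 540 * β ^ 8 + 4563 * β ^ 7 + 15012 * β ^ 6 +
        59166 * β ^ 5 + 127224 * β ^ 4 + 256955 * β ^ 3 + 318304 * β ^ 2 + 173056 * β +
        32768)) := by
  simp only [Cubic.discr, endpointCubic]
  ring

section Positivity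

variable {R : Type*} [CommRing R] [LinearOrder R] [IsStrictOrderedRing R] {β : R}

theorem discr_endpointCubic_neg (hβ : 0 < β) : (endpointCubic β).discr < 0 := by
  rw [discr_endpointCubic, neg_lt_zero]
  positivity

theorem pos_of_isRoot_endpointCubic {q : R} (hβ : 0 < β)
    (hq : (endpointCubic β).toPoly.IsRoot q) : 0 < q := by
  refine pos_of_isRoot_of_alternating_signs ?_ ?_ ?_ ?_ hq <;>
    simp only [endpointCubic, neg_nonpos, neg_lt_zero] <;> positivity

end Positivity

/-- The cubic determining the endpoint `q(β)` of the equilibrium support has exactly one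
real root, which is strictly positive. -/
theorem cubic_unique_positive_root (β : ℝ) (hβ : 0 < β) :
    (∃! q : ℝ, 27 * (1 + β) ^ 2 * q ^ 3 - 16 * (9 * β ^ 2 + 9 * β + 4) * q ^ 2 +
      16 * β ^ 2 * (β ^ 2 + β + 8) * q - 64 * β ^ 4 = 0) ∧
    ∀ q : ℝ, 27 * (1 + β) ^ 2 * q ^ 3 - 16 * (9 * β ^ 2 + 9 * β + 4) * q ^ 2 +
      16 * β ^ 2 * (β ^ 2 + β + 8) * q - 64 * β ^ 4 = 0 → 0 < q := by
  have leading_ne_zero : (endpointCubic β).a ≠ 0 := by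
    simp only [endpointCubic]
    positivity
  simp only [← isRoot_endpointCubic_iff]
  exact ⟨existsUnique_isRoot_of_discr_neg leading_ne_zero (discr_endpointCubic_neg hβ),
    fun _ ↦ pos_of_isRoot_endpointCubic hβ⟩
end
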